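/- There exists a countable infinite discrete group G with Kazhdan's property (T) such that H²(G ↷ 𝕋^G; 𝕋) ≠ H²(G, 𝕋); that is, the natural map Ψ₂ : H²(G, 𝕋) → H²(G ↷ 𝕋^G; 𝕋) is not surjective for the Bernoulli shift G ↷ (𝕋^G, ν^G), where ν is the Haar measure on 𝕋. Equivalently, there is a measurable 2-cocycle for this Bernoulli shift that is not cohomologous to any measurable 2-cocycle constant in the space variable. -/

import Mathlib

open MeasureTheory

noncomputable section

namespace AlgActCohomology

/-- The Borel σ-algebra on the circle group `𝕋 = {z ∈ ℂ : |z| = 1}`. -/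
noncomputable instance : MeasurableSpace Circle := borel Circle
instance : BorelSpace Circle := ⟨rfl⟩

variable {G X : Type*}

/-- The diagonal action on a product. -/
def diag (a : G → X → X) : G → X × X → X × X := fun g p => (a g p.1, a g p.2)

/-- An action is ergodic if every measurable set invariant under every group element
has measure 0 or 1. -/
def IsErgodicAction [MeasurableSpace X] (a : G → X → X) (μ : Measure X) : Prop :=
  ∀ s : Set X, MeasurableSet s → (∀ g : G, a g ⁻¹' s = s) → μ s = 0 ∨ μ s = 1

/-- An action is weakly mixing if the diagonal action on the square
(with the product measure) is ergodic. -/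
def IsWeaklyMixing [MeasurableSpace X] (a : G → X → X) (μ : Measure X) : Prop :=
  IsErgodicAction (diag a) (μ.prod μ)

/-- A (p.m.p.) group action: `a : G → X → X` is an action of `G` and every `a g`
is measure preserving. -/
structure IsPmpAction [Group G] [MeasurableSpace X] (a : G → X → X) (μ : Measure X) :
    Prop where
  act_one : ∀ x, a 1 x = x
  act_mul : ∀ g h x, a (g * h) x = a g (a h x)
  measurePreserving : ∀ g, MeasurePreserving (a g) μ μ

/-- An algebraic action: an action of `G` by continuous (automatically bijective)
additive automorphisms of a compact abelian group `X`. -/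
structure IsAlgebraicAction [Group G] [AddCommGroup X] [TopologicalSpace X]
    (a : G → X → X) : Prop where
  act_one : ∀ x, a 1 x = x
  act_mul : ∀ g h x, a (g * h) x = a g (a h x)
  continuous : ∀ g, Continuous (a g)
  act_add : ∀ g x y, a g (x + y) = a g x + a g y

/-- A measurable `𝕋`-valued 1-cocycle for an action. -/
def IsCocycle1 [Group G] [MeasurableSpace X] (a : G → X → X) (μ : Measure X)
    (c : G → X → Circle) : Prop :=
  (∀ g, Measurable (c g)) ∧ ∀ g h : G, ∀ᵐ x ∂μ, c (g * h) x = c g x * c h (a g⁻¹ x)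

/-- An action is `𝕋`-cocycle superrigid if every measurable `𝕋`-valued 1-cocycle is
cohomologous to a group homomorphism `G → 𝕋`. -/
def IsCocycleSuperrigid [Group G] [MeasurableSpace X] (a : G → X → X) (μ : Measure X) :
    Prop :=
  ∀ c : G → X → Circle, IsCocycle1 a μ c →
    ∃ (lam : G →* Circle) (b : X → Circle), Measurable b ∧
      ∀ g : G, ∀ᵐ x ∂μ, c g x = lam g * (b (a g⁻¹ x) * (b x)⁻¹)

section Char

variable (X) [AddCommGroup X] [TopologicalSpace X]

/-- The Pontryagin dual `X̂` of a compact abelian group `X`: the group of continuous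
characters `X → 𝕋`, as a subgroup of the group of all functions `X → 𝕋`. -/
def charGroup : Subgroup (X → Circle) where
  carrier := {χ | Continuous χ ∧ ∀ x y, χ (x + y) = χ x * χ y}
  one_mem' := ⟨continuous_const, fun _ _ => (one_mul 1).symm⟩
  mul_mem' := fun h1 h2 => ⟨h1.1.mul h2.1, fun x y => by
    simp only [Pi.mul_apply, h1.2 x y, h2.2 x y]; exact mul_mul_mul_comm _ _ _ _⟩
  inv_mem' := fun h => ⟨h.1.inv, fun x y => by
    simp only [Pi.inv_apply, h.2 x y, mul_inv]⟩

end Char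

section Degree1

variable [Group G] [AddCommGroup X] [TopologicalSpace X]

/-- `Z¹(G, X̂)`: 1-cocycles of `G` with coefficients in the dual module `X̂`,
where `(g • χ) x = χ (a g⁻¹ x)`. -/
def modZ1 (a : G → X → X) : Subgroup (G → charGroup X) where
  carrier := {c | ∀ (g h : G) (x : X),
    ((c (g * h) : X → Circle)) x = (c h : X → Circle) (a g⁻¹ x) * (c g : X → Circle) x}
  one_mem' := by
    intro g h x
    simp
  mul_mem' := by
    intro c₁ c₂ h1 h2 g h x
    simp only [Pi.mul_apply, Subgroup.coe_mul]
    rw [h1 g h x, h2 g h x]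
    ac_rfl
  inv_mem' := by
    intro c hc g h x
    simp only [Pi.inv_apply, InvMemClass.coe_inv]
    rw [hc g h x, mul_inv]

/-- `B¹(G, X̂)`: 1-coboundaries. -/
def modB1 (a : G → X → X) : Subgroup (G → charGroup X) where
  carrier := {c | ∃ χ : charGroup X, ∀ (g : G) (x : X),
    (c g : X → Circle) x = (χ : X → Circle) (a g⁻¹ x) * ((χ : X → Circle) x)⁻¹}
  one_mem' := ⟨1, by intro g x; simp⟩
  mul_mem' := by
    rintro c₁ c₂ ⟨χ₁, h1⟩ ⟨χ₂, h2⟩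
    refine ⟨χ₁ * χ₂, fun g x => ?_⟩
    simp only [Pi.mul_apply, Subgroup.coe_mul]
    rw [h1 g x, h2 g x, mul_inv]
    ac_rfl
  inv_mem' := by
    rintro c ⟨χ, h⟩
    refine ⟨χ⁻¹, fun g x => ?_⟩
    simp only [Pi.inv_apply, InvMemClass.coe_inv]
    rw [h g x, mul_inv, inv_inv]

variable [MeasurableSpace X]

/-- Measurable `𝕋`-valued 1-cocycles for an action, as a subgroup of all maps
`G → X → 𝕋`. -/
def measZ1 (a : G → X → X) (μ : Measure X) : Subgroup (G → X → Circle) where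
  carrier := {c | (∀ g, Measurable (c g)) ∧
    ∀ g h : G, ∀ᵐ x ∂μ, c (g * h) x = c g x * c h (a g⁻¹ x)}
  one_mem' := ⟨fun _ => measurable_const, fun g h => ae_of_all _ fun x => by simp⟩
  mul_mem' := by
    rintro c₁ c₂ ⟨m1, h1⟩ ⟨m2, h2⟩
    refine ⟨fun g => (m1 g).mul (m2 g), fun g h => ?_⟩
    filter_upwards [h1 g h, h2 g h] with x e1 e2
    simp only [Pi.mul_apply]
    rw [e1, e2]
    ac_rfl
  inv_mem' := by
    rintro c ⟨m, hc⟩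
    refine ⟨fun g => (m g).inv, fun g h => ?_⟩
    filter_upwards [hc g h] with x e
    simp only [Pi.inv_apply]
    rw [e, mul_inv]

/-- The subgroup of measurable 1-cocycles that are cohomologous to (the cocycle
induced by) a group homomorphism `G → 𝕋`; this is the preimage in `Z¹(G ↷ X; 𝕋)` of
the subgroup `Ψ₁(H¹(G, 𝕋))` of `H¹(G ↷ X; 𝕋)`, so that
`H¹(G ↷ X; 𝕋)/Ψ₁(H¹(G, 𝕋)) = measZ1 ⧸ measBPsi1`. -/
def measBPsi1 (a : G → X → X) (μ : Measure X) : Subgroup (G → X → Circle) where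
  carrier := {c | ∃ (φ : G →* Circle) (b : X → Circle), Measurable b ∧
    ∀ g : G, ∀ᵐ x ∂μ, c g x = φ g * (b (a g⁻¹ x) * (b x)⁻¹)}
  one_mem' := ⟨1, 1, measurable_const, fun g => ae_of_all _ fun x => by simp⟩
  mul_mem' := by
    rintro c₁ c₂ ⟨φ₁, b₁, hb₁, h1⟩ ⟨φ₂, b₂, hb₂, h2⟩
    refine ⟨φ₁ * φ₂, b₁ * b₂, hb₁.mul hb₂, fun g => ?_⟩
    filter_upwards [h1 g, h2 g] with x e1 e2
    simp only [Pi.mul_apply, MonoidHom.mul_apply]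
    rw [e1, e2, mul_inv]
    ac_rfl
  inv_mem' := by
    rintro c ⟨φ, b, hb, h⟩
    refine ⟨φ⁻¹, b⁻¹, hb.inv, fun g => ?_⟩
    filter_upwards [h g] with x e
    simp only [Pi.inv_apply, MonoidHom.inv_apply]
    rw [e, mul_inv, mul_inv, inv_inv]

/-- The measurable cocycle induced by a module cocycle: evaluation of characters. -/
def ind1 (c : G → charGroup X) : G → X → Circle := fun g => (c g : X → Circle)

end Degree1

section Degree2

variable [Group G]

/-- A `𝕋`-valued 2-cocycle of the group `G` (for the trivial `G`-module `𝕋`). -/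
def IsGrpCocycle2 (θ : G → G → Circle) : Prop :=
  ∀ g₁ g₂ g₃ : G, θ g₂ g₃ * (θ (g₁ * g₂) g₃)⁻¹ * θ g₁ (g₂ * g₃) * (θ g₁ g₂)⁻¹ = 1

private lemma mul4 {M : Type*} [CommGroup M] {a₁ b₁ c₁ d₁ a₂ b₂ c₂ d₂ : M}
    (h₁ : a₁ * b₁⁻¹ * c₁ * d₁⁻¹ = 1) (h₂ : a₂ * b₂⁻¹ * c₂ * d₂⁻¹ = 1) :
    (a₁ * a₂) * (b₁ * b₂)⁻¹ * (c₁ * c₂) * (d₁ * d₂)⁻¹ = 1 := by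
  have e : (a₁ * a₂) * (b₁ * b₂)⁻¹ * (c₁ * c₂) * (d₁ * d₂)⁻¹
      = (a₁ * b₁⁻¹ * c₁ * d₁⁻¹) * (a₂ * b₂⁻¹ * c₂ * d₂⁻¹) := by
    simp only [mul_inv]; ac_rfl
  rw [e, h₁, h₂, one_mul]

private lemma inv4 {M : Type*} [CommGroup M] {a b c d : M}
    (h : a * b⁻¹ * c * d⁻¹ = 1) : a⁻¹ * b * c⁻¹ * d = 1 := by
  have e : a⁻¹ * b * c⁻¹ * d = (a * b⁻¹ * c * d⁻¹)⁻¹ := by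
    simp only [mul_inv, inv_inv]; try ac_rfl
  rw [e, h, inv_one]

variable [AddCommGroup X] [TopologicalSpace X]

/-- `Z²(G, X̂)`: 2-cocycles of `G` with coefficients in the dual module `X̂`. -/
def modZ2 (a : G → X → X) : Subgroup (G → G → charGroup X) where
  carrier := {c | ∀ (g₁ g₂ g₃ : G) (x : X),
    (c g₂ g₃ : X → Circle) (a g₁⁻¹ x) * ((c (g₁ * g₂) g₃ : X → Circle) x)⁻¹ *
      (c g₁ (g₂ * g₃) : X → Circle) x * ((c g₁ g₂ : X → Circle) x)⁻¹ = 1}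
  one_mem' := by intro g₁ g₂ g₃ x; simp
  mul_mem' := by
    intro c₁ c₂ h1 h2 g₁ g₂ g₃ x
    simp only [Pi.mul_apply, Subgroup.coe_mul]
    exact mul4 (h1 g₁ g₂ g₃ x) (h2 g₁ g₂ g₃ x)
  inv_mem' := by
    intro c hc g₁ g₂ g₃ x
    simp only [Pi.inv_apply, InvMemClass.coe_inv, inv_inv]
    exact inv4 (hc g₁ g₂ g₃ x)

/-- `B²(G, X̂)`: 2-coboundaries. -/
def modB2 (a : G → X → X) : Subgroup (G → G → charGroup X) where
  carrier := {c | ∃ b : G → charGroup X, ∀ (g h : G) (x : X),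
    (c g h : X → Circle) x =
      (b h : X → Circle) (a g⁻¹ x) * ((b (g * h) : X → Circle) x)⁻¹ * (b g : X → Circle) x}
  one_mem' := ⟨1, by intro g h x; simp⟩
  mul_mem' := by
    rintro c₁ c₂ ⟨b₁, h1⟩ ⟨b₂, h2⟩
    refine ⟨b₁ * b₂, fun g h x => ?_⟩
    simp only [Pi.mul_apply, Subgroup.coe_mul]
    rw [h1 g h x, h2 g h x, mul_inv]
    try ac_rfl
  inv_mem' := by
    rintro c ⟨b, hb⟩
    refine ⟨b⁻¹, fun g h x => ?_⟩
    simp only [Pi.inv_apply, InvMemClass.coe_inv]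
    rw [hb g h x]
    simp only [mul_inv, inv_inv]
    try ac_rfl

variable [MeasurableSpace X]

/-- Measurable `𝕋`-valued 2-cocycles for an action. -/
def measZ2 (a : G → X → X) (μ : Measure X) : Subgroup (G → G → X → Circle) where
  carrier := {c | (∀ g h, Measurable (c g h)) ∧
    ∀ g₁ g₂ g₃ : G, ∀ᵐ x ∂μ,
      c g₂ g₃ (a g₁⁻¹ x) * (c (g₁ * g₂) g₃ x)⁻¹ * c g₁ (g₂ * g₃) x * (c g₁ g₂ x)⁻¹ = 1}
  one_mem' := ⟨fun _ _ => measurable_const, fun g₁ g₂ g₃ => ae_of_all _ fun x => by simp⟩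
  mul_mem' := by
    rintro c₁ c₂ ⟨m1, h1⟩ ⟨m2, h2⟩
    refine ⟨fun g h => (m1 g h).mul (m2 g h), fun g₁ g₂ g₃ => ?_⟩
    filter_upwards [h1 g₁ g₂ g₃, h2 g₁ g₂ g₃] with x e1 e2
    simp only [Pi.mul_apply]
    exact mul4 e1 e2
  inv_mem' := by
    rintro c ⟨m, hc⟩
    refine ⟨fun g h => (m g h).inv, fun g₁ g₂ g₃ => ?_⟩
    filter_upwards [hc g₁ g₂ g₃] with x e
    simp only [Pi.inv_apply, inv_inv]
    exact inv4 e

/-- The subgroup of measurable 2-cocycles that are cohomologous to a constant (in the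
space variable) 2-cocycle coming from a group 2-cocycle `θ : G² → 𝕋`; this is the
preimage in `Z²(G ↷ X; 𝕋)` of the subgroup `Ψ₂(H²(G, 𝕋))` of `H²(G ↷ X; 𝕋)`, so that
`H²(G ↷ X; 𝕋)/Ψ₂(H²(G, 𝕋)) = measZ2 ⧸ measBPsi2`. -/
def measBPsi2 (a : G → X → X) (μ : Measure X) : Subgroup (G → G → X → Circle) where
  carrier := {c | ∃ (θ : G → G → Circle) (b : G → X → Circle), IsGrpCocycle2 θ ∧
    (∀ g, Measurable (b g)) ∧
    ∀ g h : G, ∀ᵐ x ∂μ, c g h x = θ g h * (b h (a g⁻¹ x) * (b (g * h) x)⁻¹ * b g x)}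
  one_mem' := ⟨fun _ _ => 1, fun _ => 1, fun g₁ g₂ g₃ => by simp, fun _ => measurable_const,
    fun g h => ae_of_all _ fun x => by simp⟩
  mul_mem' := by
    rintro c₁ c₂ ⟨θ₁, b₁, hθ₁, hb₁, h1⟩ ⟨θ₂, b₂, hθ₂, hb₂, h2⟩
    refine ⟨fun g h => θ₁ g h * θ₂ g h, fun g => b₁ g * b₂ g,
      fun g₁ g₂ g₃ => mul4 (hθ₁ g₁ g₂ g₃) (hθ₂ g₁ g₂ g₃),
      fun g => (hb₁ g).mul (hb₂ g), fun g h => ?_⟩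
    filter_upwards [h1 g h, h2 g h] with x e1 e2
    simp only [Pi.mul_apply]
    rw [e1, e2]
    simp only [mul_inv]
    ac_rfl
  inv_mem' := by
    rintro c ⟨θ, b, hθ, hb, hc⟩
    refine ⟨fun g h => (θ g h)⁻¹, fun g => (b g)⁻¹,
      fun g₁ g₂ g₃ => by simpa only [inv_inv] using inv4 (hθ g₁ g₂ g₃),
      fun g => (hb g).inv, fun g h => ?_⟩
    filter_upwards [hc g h] with x e
    simp only [Pi.inv_apply]
    rw [e]
    simp only [mul_inv, inv_inv]
    try ac_rfl

/-- The measurable 2-cocycle induced by a module 2-cocycle: evaluation of characters. -/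
def ind2 (c : G → G → charGroup X) : G → G → X → Circle := fun g h => (c g h : X → Circle)

end Degree2

section Bernoulli

/-- The Bernoulli shift action `G ↷ X₀^G`, `(g • x) h = x (g⁻¹ h)`. -/
def bernoulliShift (G X₀ : Type*) [Group G] : G → (G → X₀) → (G → X₀) :=
  fun g x h => x (g⁻¹ * h)

/-- `μ` is the product along `ι` of copies of `μ₀`: it gives every finite-dimensional
cylinder set its product measure.  (This characterizes the Bernoulli product measure
`μ₀^ι` uniquely.) -/
def IsBernoulliMeasure {ι X₀ : Type*} [MeasurableSpace X₀] (μ₀ : Measure X₀)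
    (μ : Measure (ι → X₀)) : Prop :=
  ∀ (s : Finset ι) (t : ι → Set X₀), (∀ i, MeasurableSet (t i)) →
    μ {x | ∀ i ∈ s, x i ∈ t i} = ∏ i ∈ s, μ₀ (t i)

/-- The class `𝒢` of countable groups `G` such that for every standard probability
space `(X₀, μ₀)` the Bernoulli shift `G ↷ (X₀^G, μ₀^G)` is `𝕋`-cocycle superrigid. -/
def InClassG (G : Type*) [Group G] : Prop :=
  ∀ (X₀ : Type) [MeasurableSpace X₀] [StandardBorelSpace X₀]
    (μ₀ : Measure X₀) [IsProbabilityMeasure μ₀]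
    (μ : Measure (G → X₀)) [IsProbabilityMeasure μ],
    IsBernoulliMeasure μ₀ μ → IsCocycleSuperrigid (bernoulliShift G X₀) μ

end Bernoulli


/-- Kazhdan's property (T): every unitary representation of `G` on a complex Hilbert
space with almost invariant vectors has a nonzero invariant vector. -/
def HasPropertyT (G : Type*) [Group G] : Prop :=
  ∀ (H : Type) [NormedAddCommGroup H] [InnerProductSpace ℂ H] [CompleteSpace H]
    (π : G →* (H ≃ₗᵢ[ℂ] H)),
    (∀ (F : Finset G) (ε : ℝ), 0 < ε →
      ∃ ξ : H, ‖ξ‖ = 1 ∧ ∀ g ∈ F, ‖π g ξ - ξ‖ < ε) →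
    ∃ ξ : H, ξ ≠ 0 ∧ ∀ g : G, π g ξ = ξ

/-!
Let `Γ` be generated by three elements of prime order `p`, any two of which generate a mod-`p`
Heisenberg group. In a unitary representation let `Qᵢ` be the projection onto the orthogonal
complement of the vectors fixed by the `i`-th generator. The representation theory of the
Heisenberg group gives `Qᵢ Qⱼ + Qⱼ Qᵢ ≥ -(Qᵢ + Qⱼ) / √p`, so for `p ≥ 16` the sum `Δ` of the `Qᵢ`
satisfies `Δ² ≥ Δ / 2`. This is property (T) in a quantitative form: a vector moved by at most `δ`
by the generators is within `3pδ` of a fixed vector.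

A unipotent action of `Γ` on `𝔽_p[X]³` provides a height on `Γ` for which each element is the
strictly lowest point of its coset of one of the three subgroups generated by a single generator.
Hence `Γ` is infinite and every function on `Γ` is a sum of three functions, the `i`-th of them
invariant under the `i`-th generator. Applied to the delta function at `1`, and since `Γ` is the
amalgam of its finite subgroups generated by two generators, this produces a `ℤΓ`-valued 2-cocycle
`c` such that, for `b` in a `Γ`-module, `c · b` is a coboundary only if `K • b = f₀ + f₁ + f₂` with
`K > 0` and `fᵢ` fixed by the `i`-th generator. Take for `b` the coordinate function `x ↦ x 1` in
the module of circle-valued functions on the Bernoulli shift: if `c · b` were cohomologous to a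
constant cocycle, then a scalar multiple of `bᴷ` would be a product `F₀ F₁ F₂` with `Fᵢ` invariant
up to a scalar under the `i`-th generator.

To exclude this, let `D i k` be the multiplicative derivative of `Fᵢ` along the translation by the
element equal to `exp(iε)` on the elements of `Γ` of degree `k` modulo `p` and to `1` elsewhere.
As multiplication operators on `L²` the `D i k` commute, nearly fix the constant `1`, are
cyclically permuted in `k` by the `i`-th generator, and `D 0 k * D 1 k * D 2 k` is the scalar
`κ k`, which is `exp(iε)ᴷ ≠ 1` for `k = 0` and `1` for the other `k`. Tensoring with the inverses
removes the scalars, so that the quantitative property (T) applies in the tensor square and gives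
vectors close to `1 ⊗ 1` which are compatible with all the operators. Regarded as Hilbert-Schmidt
operators these have rank one spectral cut-offs, and comparing their values at `1` yields
`κ (k + 1) = κ k`, a contradiction.
-/

open scoped commutatorElement InnerProductSpace TensorProduct ComplexConjugate Polynomial

section HeisenbergPair

/-- `x` and `y` satisfy the defining relations of the mod `p` Heisenberg group, that is, of the
group of unitriangular `3 × 3` matrices over `ℤ/p`: their orders divide `p` and their commutator
commutes with both. -/
structure IsHeisenbergPair {Γ : Type*} [Group Γ] (p : ℕ) (x y : Γ) : Prop where
  pow_left : x ^ p = 1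
  pow_right : y ^ p = 1
  commute_left : Commute x ⁅x, y⁆
  commute_right : Commute y ⁅x, y⁆

namespace IsHeisenbergPair

variable {Γ Γ' : Type*} [Group Γ] [Group Γ'] {p : ℕ} {x y : Γ}

theorem symm (h : IsHeisenbergPair p x y) : IsHeisenbergPair p y x where
  pow_left := h.pow_right
  pow_right := h.pow_left
  commute_left := commutatorElement_inv x y ▸ h.commute_right.inv_right
  commute_right := commutatorElement_inv x y ▸ h.commute_left.inv_right

theorem map (f : Γ →* Γ') (h : IsHeisenbergPair p x y) : IsHeisenbergPair p (f x) (f y) where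
  pow_left := by rw [← map_pow, h.pow_left, map_one]
  pow_right := by rw [← map_pow, h.pow_right, map_one]
  commute_left := by simpa only [map_commutatorElement] using h.commute_left.map f
  commute_right := by simpa only [map_commutatorElement] using h.commute_right.map f

theorem pow_mul_right (h : IsHeisenbergPair p x y) (i : ℕ) :
    x ^ i * y = ⁅x, y⁆ ^ i * y * x ^ i := by
  induction i with
  | zero => simp
  | succ n ih =>
    have hxy : x * y = ⁅x, y⁆ * y * x := by simp [commutatorElement_def]
    calc x ^ (n + 1) * y = x * ⁅x, y⁆ ^ n * y * x ^ n := by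
          rw [pow_succ', mul_assoc, ih]; simp only [mul_assoc]
      _ = ⁅x, y⁆ ^ n * (x * y) * x ^ n := by
          rw [(h.commute_left.pow_right n).eq]; simp only [mul_assoc]
      _ = ⁅x, y⁆ ^ (n + 1) * y * x ^ (n + 1) := by
          rw [hxy, pow_succ, pow_succ' x]; simp only [mul_assoc]

theorem commutator_pow (h : IsHeisenbergPair p x y) : ⁅x, y⁆ ^ p = 1 := by
  simpa [h.pow_left] using h.pow_mul_right p

end IsHeisenbergPair

end HeisenbergPair

section CyclicAverage

theorem pow_mul_of_mul_eq {M : Type*} [Monoid M] {a t : M} (h : a * t = t) (n : ℕ) :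
    a ^ n * t = t := by
  induction n with
  | zero => simp
  | succ n ih => rw [pow_succ, mul_assoc, h, ih]

variable {A : Type*} [Ring A] [Algebra ℝ A] {p : ℕ} {a b t : A}

/-- The average `p⁻¹ (1 + a + ⋯ + a ^ (p - 1))`. If `a ^ p = 1`, it is the projection onto the
elements fixed by `a`. -/
def cyclicAverage (p : ℕ) (a : A) : A := (p : ℝ)⁻¹ • ∑ i ∈ Finset.range p, a ^ i

theorem mul_cyclicAverage (ha : a ^ p = 1) : a * cyclicAverage p a = cyclicAverage p a := by
  have hsum : a * ∑ i ∈ Finset.range p, a ^ i = ∑ i ∈ Finset.range p, a ^ i := by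
    have := mul_geom_sum a p
    rwa [ha, sub_self, sub_mul, one_mul, sub_eq_zero] at this
  rw [cyclicAverage, mul_smul_comm, hsum]

theorem commute_cyclicAverage_right (h : Commute b a) (p : ℕ) : Commute b (cyclicAverage p a) :=
  (Commute.sum_right _ _ _ fun i _ => h.pow_right i).smul_right _

theorem commute_cyclicAverage_left (h : Commute a b) (p : ℕ) : Commute (cyclicAverage p a) b :=
  (commute_cyclicAverage_right h.symm p).symm

theorem cyclicAverage_mul (ha : a ^ p = 1) : cyclicAverage p a * a = cyclicAverage p a := by
  rw [(commute_cyclicAverage_left (Commute.refl a) p).eq, mul_cyclicAverage ha]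

theorem cyclicAverage_mul_of_mul_eq (hp : p ≠ 0) (h : a * t = t) : cyclicAverage p a * t = t := by
  simp only [cyclicAverage, smul_mul_assoc, Finset.sum_mul, pow_mul_of_mul_eq h, Finset.sum_const,
    Finset.card_range]
  rw [← Nat.cast_smul_eq_nsmul ℝ, inv_smul_smul₀ (Nat.cast_ne_zero.2 hp)]

theorem isIdempotentElem_cyclicAverage (hp : p ≠ 0) (ha : a ^ p = 1) :
    IsIdempotentElem (cyclicAverage p a) :=
  cyclicAverage_mul_of_mul_eq hp (mul_cyclicAverage ha)

variable [StarRing A]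

theorem isStarProjection_cyclicAverage (hp : p ≠ 0) {u : unitary A} (hu : u ^ p = 1) :
    IsStarProjection (cyclicAverage p (u : A)) := by
  have hu' : (u : A) ^ p = 1 := congrArg Subtype.val hu
  set E := cyclicAverage p (u : A) with hE
  have hfix : star (u : A) * E = E := by
    conv_lhs => rw [hE, ← mul_cyclicAverage hu', ← mul_assoc, Unitary.coe_star_mul_self, one_mul]
  have hstar : star E = cyclicAverage p (star (u : A)) := by
    simp only [hE, cyclicAverage, star_inv_natCast_smul, star_sum, star_pow]
  have hself : star E * E = E := by
    rw [hstar]; exact cyclicAverage_mul_of_mul_eq hp hfix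
  exact ⟨isIdempotentElem_cyclicAverage hp hu', hself ▸ IsSelfAdjoint.star_mul_self E⟩

end CyclicAverage

section HeisenbergAverages

variable {A : Type*} [Ring A] [Algebra ℝ A] [StarRing A] {p : ℕ} {x y : unitary A}

theorem IsHeisenbergPair.commute_cyclicAverage_mul (hp : p ≠ 0) (h : IsHeisenbergPair p x y) :
    Commute (cyclicAverage p (x : A))
      (cyclicAverage p (y : A) * cyclicAverage p (⁅x, y⁆ : unitary A).1) := by
  set z : A := (⁅x, y⁆ : unitary A).1
  set E := cyclicAverage p z
  have hzp : z ^ p = 1 := congrArg Subtype.val h.commutator_pow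
  have hzE : z * E = E := mul_cyclicAverage hzp
  have hxz : Commute (x : A) z := h.commute_left.map (unitary A).subtype
  have hyz : Commute (y : A) z := h.commute_right.map (unitary A).subtype
  have hxE : Commute (x : A) E := commute_cyclicAverage_right hxz p
  have hyE : Commute (y : A) E := commute_cyclicAverage_right hyz p
  have hxy : (x : A) * y = z * y * x :=
    congrArg Subtype.val (show x * y = ⁅x, y⁆ * y * x by simp [commutatorElement_def])
  have hyE' : Commute (x : A) (y * E) := by
    calc (x : A) * (y * E) = z * y * x * E := by rw [← mul_assoc, hxy]
      _ = y * x * (z * E) := by rw [← hyz.eq, mul_assoc (y : A), ← hxz.eq]; simp only [mul_assoc]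
      _ = y * E * x := by rw [hzE, mul_assoc, hxE.eq, mul_assoc]
  have hpow (j : ℕ) : Commute (x : A) (y ^ j * E) := by
    induction j with
    | zero => simpa using hxE
    | succ j ih =>
      have : (y : A) ^ (j + 1) * E = y ^ j * E * (y * E) := by
        rw [hyE.eq, mul_assoc, ← mul_assoc E, (isIdempotentElem_cyclicAverage hp hzp).eq, ← hyE.eq,
          ← mul_assoc, pow_succ]
      exact this ▸ ih.mul_right hyE'
  refine commute_cyclicAverage_left ?_ p
  rw [cyclicAverage, smul_mul_assoc, Finset.sum_mul]
  exact (Commute.sum_right _ _ _ fun j _ => hpow j).smul_right _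

theorem IsHeisenbergPair.cyclicAverage_mul_pow_mul_cyclicAverage (hp : p.Prime)
    (h : IsHeisenbergPair p x y) {i : ℕ} (hi : i.Coprime p) :
    cyclicAverage p (y : A) * (x : A) ^ i * cyclicAverage p (y : A) *
      (1 - cyclicAverage p (⁅x, y⁆ : unitary A).1) = 0 := by
  set z : A := (⁅x, y⁆ : unitary A).1
  set R := cyclicAverage p (y : A)
  set T := R * (x : A) ^ i * R
  have hyp : (y : A) ^ p = 1 := congrArg Subtype.val h.pow_right
  have hzp : z ^ p = 1 := congrArg Subtype.val h.commutator_pow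
  have hxz : Commute (x : A) z := h.commute_left.map (unitary A).subtype
  have hyz : Commute (y : A) z := h.commute_right.map (unitary A).subtype
  have hRz : Commute R z := commute_cyclicAverage_left hyz p
  have hTz : Commute T z := (hRz.mul_left (hxz.pow_left i)).mul_left hRz
  have hpow : z ^ i * T = T :=
    calc z ^ i * T = R * y * z ^ i * x ^ i * R := by
          rw [cyclicAverage_mul hyp, (hRz.pow_right i).eq]; simp only [T, mul_assoc]
      _ = R * (z ^ i * y * x ^ i) * R := by
          rw [← (hyz.pow_right i).eq]; simp only [mul_assoc]
      _ = R * (x ^ i * y) * R := by rw [show (x : A) ^ i * y = z ^ i * y * x ^ i from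
          congrArg Subtype.val (h.pow_mul_right i)]
      _ = T := by rw [mul_assoc, mul_assoc, mul_cyclicAverage hyp, ← mul_assoc]
  obtain ⟨n, hn⟩ := exists_pow_eq_self_of_coprime
    (hi.coprime_dvd_right (orderOf_dvd_of_pow_eq_one hzp))
  have hzT : z * T = T := by simpa only [hn] using pow_mul_of_mul_eq hpow n
  rw [mul_sub, mul_one, (commute_cyclicAverage_right hTz p).eq,
    cyclicAverage_mul_of_mul_eq hp.ne_zero hzT, sub_self]

theorem IsHeisenbergPair.cyclicAverage_mul_mul_cyclicAverage (hp : p.Prime)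
    (h : IsHeisenbergPair p x y) :
    cyclicAverage p (y : A) * cyclicAverage p (x : A) * cyclicAverage p (y : A) *
        (1 - cyclicAverage p (⁅x, y⁆ : unitary A).1) =
      (p : ℝ)⁻¹ • (cyclicAverage p (y : A) * (1 - cyclicAverage p (⁅x, y⁆ : unitary A).1)) := by
  set R := cyclicAverage p (y : A)
  set Q := 1 - cyclicAverage p (⁅x, y⁆ : unitary A).1
  have hR : R * R = R :=
    isIdempotentElem_cyclicAverage hp.ne_zero (congrArg Subtype.val h.pow_right)
  have hsum : ∑ i ∈ Finset.range p, R * (x : A) ^ i * R * Q = R * Q := by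
    rw [Finset.sum_eq_single_of_mem 0 (Finset.mem_range.2 hp.pos), pow_zero, mul_one, hR]
    exact fun i hi hi0 => h.cyclicAverage_mul_pow_mul_cyclicAverage hp
      (Nat.coprime_of_lt_prime hi0 (Finset.mem_range.1 hi) hp).symm
  rw [← hsum, cyclicAverage, mul_smul_comm, smul_mul_assoc, smul_mul_assoc, Finset.mul_sum,
    Finset.sum_mul, Finset.sum_mul]

end HeisenbergAverages

section AlmostOrthogonalProjections

variable {A : Type*} [Ring A] [StarRing A] [PartialOrder A] [StarOrderedRing A] [Algebra ℝ A]
  [StarModule ℝ A] {P R E : A} {ε : ℝ}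

theorem mul_add_mul_le_smul_add_of_conj_le (hP : IsStarProjection P) (hR : IsStarProjection R)
    (hε : 0 < ε) (h : R * P * R ≤ ε ^ 2 • R) : P * R + R * P ≤ ε • (P + R) := by
  have hPP : P * P = P := hP.isIdempotentElem
  have hsq : star (ε • P - P * R) * (ε • P - P * R) =
      ε ^ 2 • P - ε • (P * R + R * P) + R * P * R := by
    simp only [star_sub, star_smul, star_mul, hP.isSelfAdjoint.star_eq, hR.isSelfAdjoint.star_eq,
      star_trivial, sub_mul, mul_sub, smul_mul_assoc, mul_smul_comm, ← mul_assoc, hPP]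
    rw [mul_assoc R P P, hPP]
    module
  have hnonneg : 0 ≤ ε ^ 2 • P - ε • (P * R + R * P) + ε ^ 2 • R :=
    (hsq ▸ star_mul_self_nonneg (ε • P - P * R)).trans (by gcongr)
  have hscaled : 0 ≤ ε • (ε • (P + R) - (P * R + R * P)) := by
    refine hnonneg.trans_eq ?_
    module
  have := smul_nonneg (inv_nonneg.2 hε.le) hscaled
  rwa [inv_smul_smul₀ hε.ne', sub_nonneg] at this

theorem neg_smul_le_compl_mul_compl_of_conj_le (hP : IsStarProjection P) (hR : IsStarProjection R)
    (hε : 0 < ε) (hε1 : ε ≤ 1) (h : R * P * R ≤ ε ^ 2 • R) :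
    -(ε • ((1 - P) + (1 - R))) ≤ (1 - P) * (1 - R) + (1 - R) * (1 - P) := by
  set k := 1 + ε
  set S := P + R
  have hSS : S * S ≤ k • S := by
    calc S * S = S + (P * R + R * P) := by
          simp only [S, add_mul, mul_add, hP.isIdempotentElem.eq, hR.isIdempotentElem.eq]; abel
      _ ≤ S + ε • S := by gcongr; exact mul_add_mul_le_smul_add_of_conj_le hP hR hε h
      _ = k • S := by rw [add_smul, one_smul]
  have hself : IsSelfAdjoint (k • (1 : A) - S) :=
    ((IsSelfAdjoint.all k).smul (IsSelfAdjoint.one A)).sub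
      (hP.isSelfAdjoint.add hR.isSelfAdjoint)
  have hfactor : k • ((1 - P) * (1 - R) + (1 - R) * (1 - P) + ε • ((1 - P) + (1 - R))) =
      (2 : ℝ) • ((k • (1 : A) - S) * (k • (1 : A) - S)) + (1 - ε) • (k • S - S * S) := by
    simp only [k, S, add_mul, mul_add, sub_mul, mul_sub, hP.isIdempotentElem.eq,
      hR.isIdempotentElem.eq, smul_mul_assoc, mul_smul_comm, one_mul, mul_one]
    module
  have hk : 0 < k := by positivity
  have hscaled : 0 ≤ k • ((1 - P) * (1 - R) + (1 - R) * (1 - P) + ε • ((1 - P) + (1 - R))) := by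
    rw [hfactor]
    exact add_nonneg (smul_nonneg zero_le_two hself.mul_self_nonneg)
      (smul_nonneg (sub_nonneg.2 hε1) (sub_nonneg.2 hSS))
  have := smul_nonneg (inv_nonneg.2 hk.le) hscaled
  rwa [inv_smul_smul₀ hk.ne', ← neg_le_iff_add_nonneg] at this

theorem mul_add_mul_add_smul_mul_nonneg_of_commute (hP : IsStarProjection P)
    (hR : IsStarProjection R) (hE : IsStarProjection E) (hPE : Commute P E) (hRE : Commute R E)
    (hPRE : Commute P (R * E)) (hε : 0 ≤ ε) : 0 ≤ (P * R + R * P + ε • (P + R)) * E := by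
  have hPE_proj : IsStarProjection (P * E) := hP.mul hE hPE
  have hRE_proj : IsStarProjection (R * E) := hR.mul hE hRE
  have hprod : IsStarProjection (P * E * (R * E)) :=
    hPE_proj.mul hRE_proj (hPRE.mul_left (hRE.symm.mul_right (Commute.refl E)))
  have hPR : P * E * (R * E) = P * R * E := by
    rw [mul_assoc, ← mul_assoc E, ← hRE.eq, mul_assoc R, hE.isIdempotentElem.eq, mul_assoc]
  have hRP : R * P * E = P * R * E := by
    rw [mul_assoc, hPE.eq, ← mul_assoc, ← hPRE.eq, mul_assoc]
  have hexpand : (P * R + R * P + ε • (P + R)) * E =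
      (2 : ℝ) • (P * E * (R * E)) + ε • (P * E + R * E) := by
    simp only [add_mul, smul_mul_assoc, hPR, hRP]
    module
  rw [hexpand]
  exact add_nonneg (smul_nonneg zero_le_two hprod.nonneg)
    (smul_nonneg hε (add_nonneg hPE_proj.nonneg hRE_proj.nonneg))

theorem compl_mul_compl_mul_nonneg_of_conj_le (hP : IsStarProjection P) (hR : IsStarProjection R)
    (hE : IsStarProjection E) (hPE : Commute P E) (hRE : Commute R E) (hε : 0 < ε) (hε1 : ε ≤ 1)
    (h : R * P * R * E ≤ ε ^ 2 • (R * E)) :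
    0 ≤ ((1 - P) * (1 - R) + (1 - R) * (1 - P) + ε • ((1 - P) + (1 - R))) * E := by
  have hEE : E * E = E := hE.isIdempotentElem
  have hconj : R * E * (P * E) * (R * E) = R * P * R * E := by
    simp only [mul_assoc, hPE.symm.left_comm, hRE.symm.left_comm, hEE]
  have hcorner := neg_smul_le_compl_mul_compl_of_conj_le (hP.mul hE hPE) (hR.mul hE hRE) hε hε1
    (hconj ▸ h)
  rw [neg_le_iff_add_nonneg] at hcorner
  refine (hE.isSelfAdjoint.conjugate_nonneg hcorner).trans_eq ?_
  simp only [sub_mul, mul_sub, add_mul, mul_add, smul_mul_assoc, mul_smul_comm, one_mul, mul_one,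
    mul_assoc, hPE.symm.left_comm, hRE.symm.left_comm, hEE]

theorem neg_smul_le_compl_mul_compl (hP : IsStarProjection P) (hR : IsStarProjection R)
    (hE : IsStarProjection E) (hPE : Commute P E) (hRE : Commute R E) (hPRE : Commute P (R * E))
    (hε : 0 < ε) (hε1 : ε ≤ 1) (h : R * P * R * (1 - E) ≤ ε ^ 2 • (R * (1 - E))) :
    -(ε • ((1 - P) + (1 - R))) ≤ (1 - P) * (1 - R) + (1 - R) * (1 - P) := by
  have hPE' : Commute (1 - P) E := (Commute.one_left E).sub_left hPE
  have hcomm : Commute (1 - P) ((1 - R) * E) := by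
    rw [sub_mul, one_mul]
    exact hPE'.sub_right ((Commute.one_left _).sub_left hPRE)
  have hE_part := mul_add_mul_add_smul_mul_nonneg_of_commute hP.one_sub hR.one_sub hE hPE'
    ((Commute.one_left E).sub_left hRE) hcomm hε.le
  have hcompl_part := compl_mul_compl_mul_nonneg_of_conj_le hP hR hE.one_sub
    ((Commute.one_right P).sub_right hPE) ((Commute.one_right R).sub_right hRE) hε hε1 h
  have := add_nonneg hE_part hcompl_part
  rwa [← mul_add, add_sub_cancel, mul_one, ← neg_le_iff_add_nonneg] at this

end AlmostOrthogonalProjections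

section SpectralGap

variable {A : Type*} [Ring A] [StarRing A] [PartialOrder A] [StarOrderedRing A] [Algebra ℝ A]
  [StarModule ℝ A] {ι : Type*} [Fintype ι] {p : ℕ} {ε : ℝ}

theorem smul_sum_le_sum_mul_sum {Q : ι → A} (hQ : ∀ i, IsIdempotentElem (Q i))
    (h : ∀ i j, i ≠ j → -(ε • (Q i + Q j)) ≤ Q i * Q j + Q j * Q i) :
    (1 - (Fintype.card ι - 1) * ε) • ∑ i, Q i ≤ (∑ i, Q i) * ∑ i, Q i := by
  classical
  have hpair (i j : ι) : (if i = j then (2 + 2 * ε) • Q i else 0) - ε • (Q i + Q j) ≤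
      Q i * Q j + Q j * Q i := by
    split_ifs with hij
    · subst hij
      rw [(hQ i).eq]
      exact le_of_eq (by module)
    · simpa using h i j hij
  have hdouble : (2 : ℝ) • ((1 - (Fintype.card ι - 1) * ε) • ∑ i, Q i) ≤
      (2 : ℝ) • ((∑ i, Q i) * ∑ i, Q i) := by
    calc (2 : ℝ) • ((1 - (Fintype.card ι - 1) * ε) • ∑ i, Q i)
        = ∑ i, ∑ j, ((if i = j then (2 + 2 * ε) • Q i else 0) - ε • (Q i + Q j)) := by
          simp only [Finset.sum_sub_distrib, Finset.sum_ite_eq, Finset.mem_univ, if_true,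
            ← Finset.smul_sum, Finset.sum_add_distrib, Finset.sum_const, Finset.card_univ,
            ← Nat.cast_smul_eq_nsmul ℝ]
          module
      _ ≤ ∑ i, ∑ j, (Q i * Q j + Q j * Q i) :=
          Finset.sum_le_sum fun i _ => Finset.sum_le_sum fun j _ => hpair i j
      _ = (2 : ℝ) • ((∑ i, Q i) * ∑ i, Q i) := by
          simp only [Finset.sum_add_distrib, two_smul, ← Finset.mul_sum, ← Finset.sum_mul]
  simpa only [inv_smul_smul₀ (two_ne_zero' ℝ)] using
    smul_le_smul_of_nonneg_left hdouble (inv_nonneg.2 (zero_le_two (α := ℝ)))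

theorem IsHeisenbergPair.neg_smul_le_compl_mul_compl {x y : unitary A} (hp : p.Prime)
    (h : IsHeisenbergPair p x y) (hε : 0 < ε) (hε1 : ε ≤ 1) (hpε : (p : ℝ)⁻¹ ≤ ε ^ 2) :
    -(ε • ((1 - cyclicAverage p (x : A)) + (1 - cyclicAverage p (y : A)))) ≤
      (1 - cyclicAverage p (x : A)) * (1 - cyclicAverage p (y : A)) +
        (1 - cyclicAverage p (y : A)) * (1 - cyclicAverage p (x : A)) := by
  have hcomm {w : unitary A} (hw : Commute w ⁅x, y⁆) :
      Commute (cyclicAverage p (w : A)) (cyclicAverage p (⁅x, y⁆ : unitary A).1) :=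
    commute_cyclicAverage_left (commute_cyclicAverage_right (hw.map (unitary A).subtype) p) p
  have hR := isStarProjection_cyclicAverage hp.ne_zero h.pow_right
  have hE := isStarProjection_cyclicAverage hp.ne_zero h.commutator_pow
  have hRE := hcomm h.commute_right
  refine AlgActCohomology.neg_smul_le_compl_mul_compl
    (isStarProjection_cyclicAverage hp.ne_zero h.pow_left) hR hE (hcomm h.commute_left) hRE
    (h.commute_cyclicAverage_mul hp.ne_zero) hε hε1 ?_
  rw [h.cyclicAverage_mul_mul_cyclicAverage hp]
  exact smul_le_smul_of_nonneg_right hpε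
    (hR.mul hE.one_sub ((Commute.one_right _).sub_right hRE)).nonneg

theorem smul_sum_one_sub_cyclicAverage_le {u : ι → unitary A} (hp : p.Prime)
    (hu : ∀ i j, IsHeisenbergPair p (u i) (u j)) (hε : 0 < ε) (hε1 : ε ≤ 1)
    (hpε : (p : ℝ)⁻¹ ≤ ε ^ 2) :
    (1 - (Fintype.card ι - 1) * ε) • ∑ i, (1 - cyclicAverage p (u i : A)) ≤
      (∑ i, (1 - cyclicAverage p (u i : A))) * ∑ i, (1 - cyclicAverage p (u i : A)) :=
  smul_sum_le_sum_mul_sum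
    (fun i => (isIdempotentElem_cyclicAverage hp.ne_zero
      (congrArg Subtype.val (hu i i).pow_left)).one_sub)
    fun i j _ => (hu i j).neg_smul_le_compl_mul_compl hp hε hε1 hpε

end SpectralGap

section HilbertSpace

variable {H : Type*} [NormedAddCommGroup H] [InnerProductSpace ℂ H]

theorem norm_pow_apply_sub_le (u : H ≃ₗᵢ[ℂ] H) {ξ : H} {δ : ℝ} (h : ‖u ξ - ξ‖ ≤ δ) (n : ℕ) :
    ‖(u ^ n) ξ - ξ‖ ≤ n * δ := by
  induction n with
  | zero => simp
  | succ n ih =>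
    calc ‖(u ^ (n + 1)) ξ - ξ‖ = ‖(u ^ n) (u ξ - ξ) + ((u ^ n) ξ - ξ)‖ := by
          rw [pow_succ, map_sub, sub_add_sub_cancel]; rfl
      _ ≤ δ + n * δ := (norm_add_le _ _).trans
          (add_le_add ((LinearIsometryEquiv.norm_map _ _).trans_le h) ih)
      _ = (n + 1 : ℕ) * δ := by push_cast; ring

variable [CompleteSpace H]

theorem exists_apply_eq_zero_of_smul_le_mul_self {Δ : H →L[ℂ] H} {c : ℝ} (hΔ : 0 ≤ Δ)
    (hgap : c • Δ ≤ Δ * Δ) (ξ : H) :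
    ∃ η, Δ η = 0 ∧ c * ‖ξ - η‖ ^ 2 ≤ RCLike.re ⟪Δ ξ, ξ⟫_ℂ := by
  have hself : IsSelfAdjoint Δ := IsSelfAdjoint.of_nonneg hΔ
  have hsym (v w : H) : ⟪Δ v, w⟫_ℂ = ⟪v, Δ w⟫_ℂ := hself.isSymmetric v w
  have hcube : 0 ≤ Δ * (Δ * Δ - c • Δ) :=
    Commute.mul_nonneg hΔ (sub_nonneg.2 hgap)
      (((Commute.refl Δ).mul_right (Commute.refl Δ)).sub_right ((Commute.refl Δ).smul_right c))
  have hrange (v : H) : c * ‖Δ v‖ ^ 2 ≤ RCLike.re ⟪Δ (Δ v), Δ v⟫_ℂ := by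
    have := ((ContinuousLinearMap.nonneg_iff_isPositive _).1 hcube).re_inner_nonneg_left v
    have hval : RCLike.re ⟪(Δ * (Δ * Δ - c • Δ)) v, v⟫_ℂ =
        RCLike.re ⟪Δ (Δ v), Δ v⟫_ℂ - c * ‖Δ v‖ ^ 2 := by
      have : (Δ * (Δ * Δ - c • Δ)) v = Δ (Δ (Δ v)) - (c : ℂ) • Δ (Δ v) := by
        simp [mul_sub]
      rw [this, inner_sub_left, inner_smul_left, hsym (Δ (Δ v)), hsym (Δ v) v, map_sub,
        Complex.conj_ofReal, RCLike.re_to_complex, RCLike.re_to_complex, Complex.re_ofReal_mul,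
        ← inner_self_eq_norm_sq (𝕜 := ℂ) (Δ v), RCLike.re_to_complex]
    rwa [hval, sub_nonneg] at this
  have horth : ∀ v ∈ Δ.kerᗮ, c * ‖v‖ ^ 2 ≤ RCLike.re ⟪Δ v, v⟫_ℂ := by
    rw [ContinuousLinearMap.orthogonal_ker, hself.adjoint_eq]
    have hclosed : IsClosed {v : H | c * ‖v‖ ^ 2 ≤ RCLike.re ⟪Δ v, v⟫_ℂ} :=
      isClosed_le (by fun_prop) (by fun_prop)
    refine closure_minimal ?_ hclosed
    rintro _ ⟨w, rfl⟩
    exact hrange w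
  obtain ⟨η, hη, ζ, hζ, rfl⟩ := Submodule.exists_add_mem_mem_orthogonal (K := Δ.ker) ξ
  have hη : Δ η = 0 := hη
  refine ⟨η, hη, ?_⟩
  rw [add_sub_cancel_left, map_add, hη, zero_add, inner_add_right, hsym, hη, inner_zero_right,
    zero_add]
  exact horth ζ hζ

/-- The element of the C⋆-algebra of operators given by a linear isometric automorphism. -/
abbrev toUnitary : (H ≃ₗᵢ[ℂ] H) →* unitary (H →L[ℂ] H) :=
  Unitary.linearIsometryEquiv.symm.toMonoidHom

theorem norm_one_sub_cyclicAverage_apply_le {p : ℕ} (hp : p ≠ 0) (u : H ≃ₗᵢ[ℂ] H) {ξ : H} {δ : ℝ}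
    (h : ‖u ξ - ξ‖ ≤ δ) :
    ‖(1 - cyclicAverage p (toUnitary u : H →L[ℂ] H)) ξ‖ ≤ p * δ := by
  have hp' : (p : ℝ) ≠ 0 := Nat.cast_ne_zero.2 hp
  have hδ : 0 ≤ δ := (norm_nonneg _).trans h
  have hpow (i : ℕ) : ((toUnitary u : H →L[ℂ] H) ^ i) ξ = (u ^ i) ξ := by
    rw [← SubmonoidClass.coe_pow, ← map_pow]; rfl
  have haverage : (1 - cyclicAverage p (toUnitary u : H →L[ℂ] H)) ξ =
      (p : ℝ)⁻¹ • ∑ i ∈ Finset.range p, (ξ - (u ^ i) ξ) := by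
    simp only [cyclicAverage, sub_apply, one_apply_eq_self, smul_apply, sum_apply, hpow,
      Finset.sum_sub_distrib, Finset.sum_const, Finset.card_range, smul_sub,
      ← Nat.cast_smul_eq_nsmul ℝ, inv_smul_smul₀ hp']
  have hsum : ‖∑ i ∈ Finset.range p, (ξ - (u ^ i) ξ)‖ ≤ ∑ _ ∈ Finset.range p, p * δ := by
    refine norm_sum_le_of_le _ fun i hi => ?_
    rw [norm_sub_rev]
    refine (norm_pow_apply_sub_le u h i).trans ?_
    gcongr
    exact (Finset.mem_range.1 hi).le
  rw [haverage, norm_smul, norm_inv, Real.norm_natCast, inv_mul_le_iff₀ (by positivity)]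
  simpa using hsum

theorem exists_forall_apply_eq_of_isHeisenbergPair {ι : Type*} [Fintype ι] {p : ℕ} {ε δ : ℝ}
    (hp : p.Prime) {u : ι → (H ≃ₗᵢ[ℂ] H)} (hu : ∀ i j, IsHeisenbergPair p (u i) (u j))
    (hε : 0 < ε) (hε1 : ε ≤ 1) (hpε : (p : ℝ)⁻¹ ≤ ε ^ 2)
    {ξ : H} (hξ : ∀ i, ‖u i ξ - ξ‖ ≤ δ) :
    ∃ η : H, (∀ i, u i η = η) ∧
      (1 - (Fintype.card ι - 1) * ε) * ‖ξ - η‖ ^ 2 ≤ Fintype.card ι * (p * δ) ^ 2 := by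
  set Q : ι → H →L[ℂ] H := fun i => 1 - cyclicAverage p (toUnitary (u i) : H →L[ℂ] H)
  have hpow (i : ι) : toUnitary (u i) ^ p = 1 := by rw [← map_pow, (hu i i).pow_left, map_one]
  have hQ (i : ι) : IsStarProjection (Q i) :=
    (isStarProjection_cyclicAverage hp.ne_zero (hpow i)).one_sub
  have hinner (i : ι) (v : H) : RCLike.re ⟪Q i v, v⟫_ℂ = ‖Q i v‖ ^ 2 := by
    have hsym : ⟪Q i (Q i v), v⟫_ℂ = ⟪Q i v, Q i v⟫_ℂ := (hQ i).isSelfAdjoint.isSymmetric (Q i v) v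
    rw [← inner_self_eq_norm_sq (𝕜 := ℂ), ← hsym]
    conv_lhs => rw [← (hQ i).isIdempotentElem.eq]
    rfl
  have hsum (v : H) : RCLike.re ⟪(∑ i, Q i) v, v⟫_ℂ = ∑ i, ‖Q i v‖ ^ 2 := by
    simp only [sum_apply, sum_inner, map_sum, hinner]
  obtain ⟨η, hη, hdist⟩ := exists_apply_eq_zero_of_smul_le_mul_self
    (Finset.sum_nonneg fun i _ => (hQ i).nonneg)
    (smul_sum_one_sub_cyclicAverage_le hp (fun i j => (hu i j).map toUnitary) hε hε1 hpε) ξ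
  refine ⟨η, fun i => ?_, hdist.trans ?_⟩
  · have hQη : Q i η = 0 := by
      have hzero := hsum η
      rw [hη, inner_zero_left, map_zero, eq_comm,
        Finset.sum_eq_zero_iff_of_nonneg fun i _ => by positivity] at hzero
      simpa using hzero i (Finset.mem_univ i)
    have hfix : cyclicAverage p (toUnitary (u i) : H →L[ℂ] H) η = η := (sub_eq_zero.1 hQη).symm
    have hmul := mul_cyclicAverage (p := p) (a := (toUnitary (u i) : H →L[ℂ] H))
      (congrArg Subtype.val (hpow i))
    calc u i η = ((toUnitary (u i) : H →L[ℂ] H) * cyclicAverage p (toUnitary (u i)).1) η :=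
          congrArg (u i) hfix.symm
      _ = η := by rw [hmul, hfix]
  · rw [hsum, ← nsmul_eq_mul]
    refine Finset.sum_le_card_nsmul _ _ _ fun i _ => ?_
    gcongr
    exact norm_one_sub_cyclicAverage_apply_le hp.ne_zero (u i) (hξ i)

theorem exists_forall_apply_eq_and_norm_sub_le {p : ℕ} {δ : ℝ} (hp : p.Prime) (hp16 : 16 ≤ p)
    {u : Fin 3 → (H ≃ₗᵢ[ℂ] H)} (hu : ∀ i j, IsHeisenbergPair p (u i) (u j)) {ξ : H}
    (hξ : ∀ i, ‖u i ξ - ξ‖ ≤ δ) : ∃ η : H, (∀ i, u i η = η) ∧ ‖ξ - η‖ ≤ 3 * p * δ := by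
  have hp16' : (p : ℝ)⁻¹ ≤ (1 / 4) ^ 2 := by
    rw [inv_le_comm₀ (by exact_mod_cast hp.pos) (by positivity)]
    norm_num
    exact_mod_cast hp16
  obtain ⟨η, hη, hdist⟩ := exists_forall_apply_eq_of_isHeisenbergPair hp hu (ε := 1 / 4)
    (by norm_num) (by norm_num) hp16' hξ
  have hδ : 0 ≤ δ := (norm_nonneg _).trans (hξ 0)
  refine ⟨η, hη, le_of_sq_le_sq ?_ (by positivity)⟩
  norm_num at hdist
  nlinarith [sq_nonneg (p * δ)]

end HilbertSpace

section TriangleGroup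

/-- The relators `xᵢ ^ p` and `[xᵢ, [xᵢ, xⱼ]]` of `TriangleGroup p`. -/
def triangleRelators (p : ℕ) : Set (FreeGroup (Fin 3)) :=
  {r | (∃ i, r = FreeGroup.of i ^ p) ∨
    ∃ i j : Fin 3, r = ⁅FreeGroup.of i, ⁅FreeGroup.of i, FreeGroup.of j⁆⁆}

/-- The universal group generated by three elements which pairwise satisfy the relations of the
mod `p` Heisenberg group. For `p` prime it is the Kac–Moody–Steinberg group of type `Ã₂` over the
field with `p` elements. -/
abbrev TriangleGroup (p : ℕ) : Type := PresentedGroup (triangleRelators p)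

namespace TriangleGroup

variable {p : ℕ}

/-- The three standard generators of `TriangleGroup p`. -/
def gen (p : ℕ) (i : Fin 3) : TriangleGroup p := PresentedGroup.of i

theorem isHeisenbergPair_gen (i j : Fin 3) : IsHeisenbergPair p (gen p i) (gen p j) := by
  have hpow (i : Fin 3) : gen p i ^ p = 1 := by
    have hmem : FreeGroup.of i ^ p ∈ triangleRelators p := Or.inl ⟨i, rfl⟩
    exact (map_pow _ _ _).symm.trans (PresentedGroup.one_of_mem hmem)
  have hcomm (i j : Fin 3) : Commute (gen p i) ⁅gen p i, gen p j⁆ := by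
    rw [← commutatorElement_eq_one_iff_commute]
    have hmem : ⁅FreeGroup.of i, ⁅FreeGroup.of i, FreeGroup.of j⁆⁆ ∈ triangleRelators p :=
      Or.inr ⟨i, j, rfl⟩
    have hmk := PresentedGroup.one_of_mem hmem
    rwa [map_commutatorElement, map_commutatorElement] at hmk
  refine ⟨hpow i, hpow j, hcomm i j, ?_⟩
  rw [← commutatorElement_inv]
  exact (hcomm j i).inv_right

/-- The universal property of `TriangleGroup p`. -/
def lift {Γ : Type*} [Group Γ] (u : Fin 3 → Γ) (hu : ∀ i j, IsHeisenbergPair p (u i) (u j)) :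
    TriangleGroup p →* Γ :=
  PresentedGroup.toGroup (f := u) <| by
    rintro _ (⟨i, rfl⟩ | ⟨i, j, rfl⟩)
    · simpa using (hu i i).pow_left
    · simpa [map_commutatorElement, commutatorElement_eq_one_iff_commute] using
        (hu i j).commute_left

@[simp] theorem lift_gen {Γ : Type*} [Group Γ] (u : Fin 3 → Γ)
    (hu : ∀ i j, IsHeisenbergPair p (u i) (u j)) (i : Fin 3) : lift u hu (gen p i) = u i :=
  PresentedGroup.toGroup.of _

theorem closure_range_gen : Subgroup.closure (Set.range (gen p)) = ⊤ :=
  PresentedGroup.closure_range_of _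

theorem induction_on {C : TriangleGroup p → Prop} (g : TriangleGroup p) (one : C 1)
    (gen : ∀ i, C (gen p i)) (mul : ∀ a b, C a → C b → C (a * b)) (inv : ∀ a, C a → C a⁻¹) :
    C g := by
  have hg : g ∈ Subgroup.closure (Set.range (TriangleGroup.gen p)) :=
    closure_range_gen ▸ Subgroup.mem_top g
  induction hg using Subgroup.closure_induction with
  | mem x hx => obtain ⟨i, rfl⟩ := hx; exact gen i
  | one => exact one
  | mul a b _ _ ha hb => exact mul a b ha hb
  | inv a _ ha => exact inv a ha

instance : Countable (TriangleGroup p) :=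
  have : Countable (FreeGroup (Fin 3)) := inferInstanceAs (Countable (Quot _))
  (PresentedGroup.mk_surjective (triangleRelators p)).countable

theorem hasPropertyT (hp : p.Prime) (hp16 : 16 ≤ p) : HasPropertyT (TriangleGroup p) := by
  intro H _ _ _ π hπ
  classical
  have : (0 : ℝ) < p := by exact_mod_cast hp.pos
  obtain ⟨ξ, hξ1, hξ⟩ := hπ (Finset.univ.image (gen p)) (1 / (6 * p)) (by positivity)
  obtain ⟨η, hη, hdist⟩ := exists_forall_apply_eq_and_norm_sub_le hp hp16
    (fun i j => (isHeisenbergPair_gen i j).map π)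
    fun i => (hξ _ (Finset.mem_image_of_mem _ (Finset.mem_univ i))).le
  refine ⟨η, ?_, fun g => ?_⟩
  · rintro rfl
    have hhalf : 3 * (p : ℝ) * (1 / (6 * p)) = 1 / 2 := by field_simp; norm_num
    rw [sub_zero, hξ1, hhalf] at hdist
    norm_num at hdist
  · induction g using induction_on with
    | one => simp
    | gen i => exact hη i
    | mul a b ha hb => rw [map_mul, LinearIsometryEquiv.coe_mul, Function.comp_apply, hb, ha]
    | inv a ha => rw [map_inv]; exact (π a).symm_apply_eq.2 ha.symm

end TriangleGroup

end TriangleGroup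

section UnipotentRepresentation

/-- The unit `1 + a` of a ring, for `a` of square zero. -/
@[simps] def oneAddUnit {A : Type*} [Ring A] (a : A) (ha : a * a = 0) : Aˣ where
  val := 1 + a
  inv := 1 - a
  val_inv := by simp [mul_sub, add_mul, ha]
  inv_val := by simp [mul_add, sub_mul, ha]

theorem coe_oneAddUnit_pow {A : Type*} [Ring A] {a : A} (ha : a * a = 0) (n : ℕ) :
    ((oneAddUnit a ha ^ n : Aˣ) : A) = 1 + n * a := by
  induction n with
  | zero => simp
  | succ n ih =>
    have hna : (n : A) * a * a = 0 := by rw [mul_assoc, ha, mul_zero]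
    rw [pow_succ, Units.val_mul, ih, val_oneAddUnit, mul_add, mul_one, add_mul, one_mul, hna,
      Nat.cast_succ, add_mul, one_mul, add_zero, add_assoc]

theorem isHeisenbergPair_oneAddUnit {A : Type*} [Ring A] {p : ℕ} [CharP A p] {a b : A}
    (ha : a * a = 0) (hb : b * b = 0) (hab : a * b = 0) :
    IsHeisenbergPair p (oneAddUnit a ha) (oneAddUnit b hb) := by
  have hcomm : ((⁅oneAddUnit a ha, oneAddUnit b hb⁆ : Aˣ) : A) = 1 - b * a := by
    calc (1 + a) * (1 + b) * (1 - a) * (1 - b)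
        = 1 - b * a + a * b - a * a - b * b + b * a * b + a * a * b - a * b * a - a * b * b +
            a * b * a * b := by noncomm_ring
      _ = 1 - b * a := by simp [ha, hb, hab, mul_assoc]
  refine ⟨?_, ?_, ?_, ?_⟩
  · ext; rw [coe_oneAddUnit_pow, CharP.cast_eq_zero, zero_mul, add_zero, Units.val_one]
  · ext; rw [coe_oneAddUnit_pow, CharP.cast_eq_zero, zero_mul, add_zero, Units.val_one]
  · ext
    calc (1 + a) * _ = 1 - b * a + a - a * b * a := by rw [hcomm]; noncomm_ring
      _ = 1 - b * a + a - b * (a * a) := by rw [hab, ha, zero_mul, mul_zero]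
      _ = _ * (1 + a) := by rw [hcomm]; noncomm_ring
  · ext
    calc (1 + b) * _ = 1 - b * a + b - b * b * a := by rw [hcomm]; noncomm_ring
      _ = 1 - b * a + b - b * (a * b) := by rw [hab, hb, zero_mul, mul_zero]
      _ = _ * (1 + b) := by rw [hcomm]; noncomm_ring

variable {R : Type*} [CommRing R]

/-- The matrix unit `Eᵢ₊₁,ᵢ`, with cyclic indices, scaled by `c i`. -/
def cyclicSingle (c : Fin 3 → R) (i : Fin 3) : Matrix (Fin 3) (Fin 3) R :=
  Matrix.single (i + 1) i (c i)

theorem cyclicSingle_mul_cyclicSingle (c : Fin 3 → R) {i j : Fin 3} (hij : i ≠ j + 1) :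
    cyclicSingle c i * cyclicSingle c j = 0 :=
  Matrix.single_mul_single_of_ne _ _ _ _ hij _

theorem cyclicSingle_mul_self (c : Fin 3 → R) (i : Fin 3) :
    cyclicSingle c i * cyclicSingle c i = 0 :=
  cyclicSingle_mul_cyclicSingle c (by decide +revert)

/-- The elementary unipotent matrix `1 + c i • Eᵢ₊₁,ᵢ`. -/
def cyclicUnipotent (c : Fin 3 → R) (i : Fin 3) : (Matrix (Fin 3) (Fin 3) R)ˣ :=
  oneAddUnit _ (cyclicSingle_mul_self c i)

theorem isHeisenbergPair_cyclicUnipotent (p : ℕ) [CharP R p] (c : Fin 3 → R) (i j : Fin 3) :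
    IsHeisenbergPair p (cyclicUnipotent c i) (cyclicUnipotent c j) := by
  rcases (by decide +revert : i ≠ j + 1 ∨ j ≠ i + 1) with hij | hij
  · exact isHeisenbergPair_oneAddUnit _ _ (cyclicSingle_mul_cyclicSingle c hij)
  · exact (isHeisenbergPair_oneAddUnit _ _ (cyclicSingle_mul_cyclicSingle c hij)).symm

theorem cyclicUnipotent_pow_mulVec (c : Fin 3 → R) (i : Fin 3) (n : ℕ) (v : Fin 3 → R) :
    Matrix.mulVec (cyclicUnipotent c i ^ n).1 v =
      Function.update v (i + 1) (n * (c i * v i) + v (i + 1)) := by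
  rw [cyclicUnipotent, coe_oneAddUnit_pow, ← nsmul_eq_mul, Matrix.add_mulVec, Matrix.one_mulVec,
    cyclicSingle, Matrix.smul_mulVec, Matrix.single_mulVec]
  ext j
  by_cases hj : j = i + 1
  · subst hj; simp [add_comm]
  · simp [hj]

end UnipotentRepresentation

section ShiftedDegree

variable {F : Type*} [Field F]

/-- The degree of `f` plus one, or zero if `f = 0`. -/
def shiftedDegree (f : F[X]) : ℕ := (Polynomial.X * f).natDegree

@[simp] theorem shiftedDegree_eq_zero {f : F[X]} : shiftedDegree f = 0 ↔ f = 0 := by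
  by_cases hf : f = 0
  · simp [hf, shiftedDegree]
  · simp [hf, shiftedDegree, Polynomial.natDegree_X_mul]

theorem shiftedDegree_X_mul {f : F[X]} (hf : f ≠ 0) :
    shiftedDegree (Polynomial.X * f) = shiftedDegree f + 1 :=
  Polynomial.natDegree_X_mul (mul_ne_zero Polynomial.X_ne_zero hf)

theorem shiftedDegree_natCast_mul {n : ℕ} (hn : (n : F) ≠ 0) (f : F[X]) :
    shiftedDegree ((n : F[X]) * f) = shiftedDegree f := by
  rw [shiftedDegree, mul_left_comm, ← Polynomial.C_eq_natCast, Polynomial.natDegree_C_mul hn,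
    shiftedDegree]

theorem shiftedDegree_lt_natCast_mul_add {n : ℕ} (hn : (n : F) ≠ 0) {f g : F[X]}
    (h : shiftedDegree g < shiftedDegree f) :
    shiftedDegree g < shiftedDegree ((n : F[X]) * f + g) := by
  rw [← shiftedDegree_natCast_mul hn f] at h
  have hadd : shiftedDegree ((n : F[X]) * f + g) = shiftedDegree ((n : F[X]) * f) := by
    rw [shiftedDegree, mul_add]
    exact Polynomial.natDegree_add_eq_left_of_natDegree_lt h
  rwa [hadd]

theorem exists_shiftedDegree_lt {v : Fin 3 → F[X]} (hv : v ≠ 0) :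
    ∃ i, shiftedDegree (v (i + 1)) < shiftedDegree (![1, 1, Polynomial.X] i * v i) := by
  by_contra! hle
  have h01 : shiftedDegree (v 0) ≤ shiftedDegree (v 1) := by simpa using hle 0
  have h12 : shiftedDegree (v 1) ≤ shiftedDegree (v 2) := by simpa using hle 1
  have h20 : shiftedDegree (Polynomial.X * v 2) ≤ shiftedDegree (v 0) := by simpa using hle 2
  have hv2 : v 2 = 0 := by
    by_contra hv2
    rw [shiftedDegree_X_mul hv2] at h20
    omega
  rw [shiftedDegree_eq_zero.2 hv2] at h12
  have hv1 : v 1 = 0 := shiftedDegree_eq_zero.1 (by omega)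
  rw [shiftedDegree_eq_zero.2 hv1] at h01
  have hv0 : v 0 = 0 := shiftedDegree_eq_zero.1 (by omega)
  refine hv (funext fun i => ?_)
  fin_cases i <;> assumption

theorem exists_sum_shiftedDegree_lt {v : Fin 3 → F[X]} (hv : v ≠ 0) :
    ∃ i, ∀ n : ℕ, (n : F) ≠ 0 → ∑ j, shiftedDegree (v j) <
      ∑ j, shiftedDegree (Matrix.mulVec (cyclicUnipotent ![1, 1, Polynomial.X] i ^ n).1 v j) := by
  obtain ⟨i, hi⟩ := exists_shiftedDegree_lt hv
  refine ⟨i, fun n hn => ?_⟩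
  have hlt := shiftedDegree_lt_natCast_mul_add hn hi
  rw [cyclicUnipotent_pow_mulVec]
  refine Finset.sum_lt_sum (fun j _ => ?_) ⟨i + 1, Finset.mem_univ _, by simpa using hlt⟩
  by_cases hj : j = i + 1
  · subst hj; simpa using hlt.le
  · simp [hj]

end ShiftedDegree

section HeightFunction

open Classical in
theorem exists_eq_of_forall_lt_imp_eq {X M α : Type*} [Zero M] [Preorder α] [WellFoundedLT α]
    (ht : X → α) (Φ : (X → M) → X → M)
    (h : ∀ w w' x, (∀ y, ht y < ht x → w y = w' y) → Φ w x = Φ w' x) :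
    ∃ w : X → M, ∀ x, w x = Φ w x := by
  let wf : WellFounded fun x y => ht x < ht y := InvImage.wf ht wellFounded_lt
  let step (x : X) (rec : ∀ y, ht y < ht x → M) : M :=
    Φ (fun y => if hy : ht y < ht x then rec y hy else 0) x
  refine ⟨wf.fix step, fun x => (wf.fix_eq step x).trans (h _ _ _ fun y hy => dif_pos hy)⟩

theorem exists_sum_eq_of_height {X ι M α : Type*} [Fintype ι] [AddCommGroup M] [Preorder α]
    [WellFoundedLT α] (r : ι → Setoid X) (ht : X → α) (σ : X → ι)
    (h : ∀ x y, r (σ x) x y → x ≠ y → ht x < ht y) (f : X → M) :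
    ∃ n : ι → X → M, (∀ i x y, r i x y → n i x = n i y) ∧ ∀ x, ∑ i, n i x = f x := by
  classical
  -- Each class of `r i` has at most one `x` with `σ x = i`, namely its lowest point.
  let base (i : ι) (x : X) : Set X := {m | σ m = i ∧ r i m x}
  have hbase_self (x : X) : base (σ x) x = {x} := by
    ext m
    refine ⟨fun ⟨hσ, hr⟩ => ?_, by rintro rfl; exact ⟨rfl, (r _).refl _⟩⟩
    by_contra hne
    exact (h x m ((r _).symm hr) (Ne.symm hne)).asymm (h m x (hσ ▸ hr) hne)
  have hbase_lt {i : ι} {x m : X} (hi : i ≠ σ x) (hm : m ∈ base i x) : ht m < ht x := by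
    obtain ⟨rfl, hr⟩ := hm
    exact h m x hr (by rintro rfl; exact hi rfl)
  obtain ⟨w, hw⟩ := exists_eq_of_forall_lt_imp_eq ht
    (fun w x => f x - ∑ i ∈ Finset.univ.erase (σ x), ∑ᶠ m ∈ base i x, w m)
    fun w w' x hww' => congrArg (f x - ·) <| Finset.sum_congr rfl fun i hi =>
      finsum_mem_congr rfl fun m hm => hww' m (hbase_lt (Finset.ne_of_mem_erase hi) hm)
  refine ⟨fun i x => ∑ᶠ m ∈ base i x, w m, fun i x y hxy => ?_, fun x => ?_⟩
  · have : base i x = base i y := by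
      ext m
      exact and_congr_right fun _ => ⟨fun hm => (r i).trans hm hxy,
        fun hm => (r i).trans hm ((r i).symm hxy)⟩
    simp only [this]
  · simp only [← Finset.add_sum_erase _ _ (Finset.mem_univ (σ x)), hbase_self, finsum_mem_singleton,
      hw x, sub_add_cancel]

end HeightFunction

section TriangleGroupHeight

namespace TriangleGroup

variable {p : ℕ}

/-- The unipotent representation of `TriangleGroup p` over `(ZMod p)[X]`. -/
def unipotentRep (p : ℕ) : TriangleGroup p →* (Matrix (Fin 3) (Fin 3) (ZMod p)[X])ˣ :=
  lift _ (isHeisenbergPair_cyclicUnipotent p ![1, 1, Polynomial.X])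

theorem exists_height (p : ℕ) [Fact p.Prime] : ∃ (ht : TriangleGroup p → ℕ)
    (σ : TriangleGroup p → Fin 3), ∀ g h,
      QuotientGroup.rightRel (Subgroup.zpowers (gen p (σ g))) g h → g ≠ h → ht g < ht h := by
  let orbit (g : TriangleGroup p) : Fin 3 → (ZMod p)[X] :=
    Matrix.mulVec (unipotentRep p g).1 (Pi.single 0 1)
  have horbit (g h : TriangleGroup p) :
      orbit (g * h) = Matrix.mulVec (unipotentRep p g).1 (orbit h) := by
    simp only [orbit, map_mul, Units.val_mul, Matrix.mulVec_mulVec]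
  have horbit_ne_zero (g : TriangleGroup p) : orbit g ≠ 0 := by
    intro hg
    have hone : orbit 1 = 0 := by rw [← inv_mul_cancel g, horbit, hg, Matrix.mulVec_zero]
    have := congrFun hone 0
    simp [orbit] at this
  choose σ hσ using fun g => exists_sum_shiftedDegree_lt (horbit_ne_zero g)
  refine ⟨fun g => ∑ j, shiftedDegree (orbit g j), σ, fun g h hgh hne => ?_⟩
  have hpow : gen p (σ g) ^ p = 1 := (isHeisenbergPair_gen (σ g) (σ g)).pow_left
  have hfin : IsOfFinOrder (gen p (σ g)) :=
    isOfFinOrder_iff_pow_eq_one.2 ⟨p, (Fact.out : p.Prime).pos, hpow⟩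
  obtain ⟨n, hn⟩ := hfin.mem_powers_iff_mem_zpowers.2 (QuotientGroup.rightRel_apply.1 hgh)
  obtain rfl : gen p (σ g) ^ n * g = h := mul_inv_eq_iff_eq_mul.1 hn.symm |>.symm
  have hnp : (n : ZMod p) ≠ 0 := by
    rw [Ne, ZMod.natCast_eq_zero_iff]
    rintro ⟨k, rfl⟩
    simp [pow_mul, hpow] at hne
  simpa only [horbit, map_pow, unipotentRep, lift_gen] using hσ g n hnp

/-- The homomorphism sending every generator to `1`. -/
def degree (p : ℕ) : TriangleGroup p →* Multiplicative (ZMod p) :=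
  lift (fun _ => .ofAdd 1) fun _ _ => by
    have hpow : Multiplicative.ofAdd (1 : ZMod p) ^ p = 1 := by rw [← ofAdd_nsmul]; simp
    exact ⟨hpow, hpow, .all _ _, .all _ _⟩

@[simp] theorem degree_gen (i : Fin 3) : degree p (gen p i) = .ofAdd 1 := lift_gen _ _ i

theorem gen_ne_one [Fact (1 < p)] (i : Fin 3) : gen p i ≠ 1 := by
  intro hi
  have hdeg := degree_gen (p := p) i
  rw [hi, map_one, eq_comm, ofAdd_eq_one] at hdeg
  exact one_ne_zero hdeg

instance [hp : Fact p.Prime] : Infinite (TriangleGroup p) := by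
  have : Fact (1 < p) := ⟨hp.out.one_lt⟩
  obtain ⟨ht, σ, h⟩ := exists_height p
  by_contra hfin
  rw [not_infinite_iff_finite] at hfin
  obtain ⟨g, hg⟩ := Finite.exists_max ht
  refine (h g (gen p (σ g) * g) ?_ ?_).not_ge (hg _)
  · simp [QuotientGroup.rightRel_apply]
  · simpa using gen_ne_one (p := p) (σ g)

theorem exists_sum_eq {M : Type*} [AddCommGroup M] [Fact p.Prime] (f : TriangleGroup p → M) :
    ∃ n : Fin 3 → TriangleGroup p → M,
      (∀ i g, n i (gen p i * g) = n i g) ∧ ∀ g, ∑ i, n i g = f g := by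
  obtain ⟨ht, σ, h⟩ := exists_height p
  obtain ⟨n, hn, hsum⟩ := exists_sum_eq_of_height
    (fun i => QuotientGroup.rightRel (Subgroup.zpowers (gen p i))) ht σ h f
  refine ⟨n, fun i g => (hn i _ _ ?_).symm, hsum⟩
  simp [QuotientGroup.rightRel_apply]

end TriangleGroup

end TriangleGroupHeight

theorem IsHeisenbergPair.finite_closure {Γ : Type*} [Group Γ] {p : ℕ} {x y : Γ} (hp : p ≠ 0)
    (h : IsHeisenbergPair p x y) : Finite (Subgroup.closure {x, y}) := by
  have hfin {a : Γ} (ha : a ^ p = 1) : IsOfFinOrder a :=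
    isOfFinOrder_iff_pow_eq_one.2 ⟨p, Nat.pos_of_ne_zero hp, ha⟩
  have hclosure : Subgroup.closure {x, y} = (Submonoid.closure {x, y} : Set Γ) := by
    rw [← Subgroup.closure_toSubmonoid_of_isOfFinOrder (by
      rintro a (rfl | rfl)
      exacts [hfin h.pow_left, hfin h.pow_right])]
    rfl
  have hnormal (g : Γ) (hg : g ∈ Submonoid.closure {x, y}) :
      ∃ k j i : ℕ, ⁅x, y⁆ ^ k * y ^ j * x ^ i = g := by
    induction hg using Submonoid.closure_induction_right with
    | one => exact ⟨0, 0, 0, by simp⟩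
    | mul_right g _ a ha ih =>
      obtain ⟨k, j, i, rfl⟩ := ih
      obtain rfl | rfl := ha
      · exact ⟨k, j, i + 1, by rw [pow_succ, ← mul_assoc]⟩
      · refine ⟨k + i, j + 1, i, ?_⟩
        calc ⁅x, a⁆ ^ (k + i) * a ^ (j + 1) * x ^ i
            = ⁅x, a⁆ ^ k * (⁅x, a⁆ ^ i * a ^ j) * a * x ^ i := by
              rw [pow_add, pow_succ]; simp only [mul_assoc]
          _ = ⁅x, a⁆ ^ k * a ^ j * x ^ i * a := by
              rw [← (h.commute_right.pow_pow j i).eq, mul_assoc _ (x ^ i), h.pow_mul_right]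
              simp only [mul_assoc]
  refine Set.Finite.to_subtype (hclosure ▸ Set.Finite.subset
    (((hfin h.commutator_pow).finite_powers.mul (hfin h.pow_right).finite_powers).mul
      (hfin h.pow_left).finite_powers) fun g hg => ?_)
  obtain ⟨k, j, i, rfl⟩ := hnormal g hg
  exact Set.mul_mem_mul (Set.mul_mem_mul ⟨k, rfl⟩ ⟨j, rfl⟩) ⟨i, rfl⟩

section Coboundary

variable {Γ B : Type*} [Group Γ] [AddCommGroup B] (ρ : Representation ℤ Γ B)

/-- The coboundary of an inhomogeneous 1-cochain with values in a representation. -/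
def coboundary (β : Γ → B) (g h : Γ) : B := β g + ρ g (β h) - β (g * h)

/-- Inhomogeneous 2-cocycles with values in a representation. -/
def IsTwoCocycle (c : Γ → Γ → B) : Prop :=
  ∀ g₁ g₂ g₃, ρ g₁ (c g₂ g₃) - c (g₁ * g₂) g₃ + c g₁ (g₂ * g₃) - c g₁ g₂ = 0

theorem asAlgebraHom_leftRegular (g : Γ) (s : MonoidAlgebra ℤ Γ) :
    ρ.asAlgebraHom (Representation.leftRegular ℤ Γ g s) = ρ g * ρ.asAlgebraHom s := by
  have h : Representation.leftRegular ℤ Γ g s = .single g 1 * s := by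
    rw [← Representation.asAlgebraHom_ofMulAction_smul_eq_mul,
      Representation.asAlgebraHom_single_one]
  rw [h, map_mul, Representation.asAlgebraHom_single_one]

theorem coboundary_eq_zero {β : Γ → B} {g h : Γ} :
    coboundary ρ β g h = 0 ↔ β g + ρ g (β h) = β (g * h) := sub_eq_zero

theorem isTwoCocycle_coboundary (β : Γ → B) : IsTwoCocycle ρ (coboundary ρ β) := by
  intro g₁ g₂ g₃
  simp only [coboundary, map_sub, map_add, map_mul, Module.End.mul_apply, mul_assoc]
  abel

/-- The classical vanishing of the first cohomology of a finite group up to multiplication by its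
order. -/
theorem exists_card_nsmul_eq_sub {P : Subgroup Γ} [Finite P] {r : Γ → B}
    (hr : ∀ g ∈ P, ∀ h ∈ P, coboundary ρ r g h = 0) :
    ∃ R : B, ∀ g ∈ P, Nat.card P • r g = R - ρ g R := by
  have := Fintype.ofFinite P
  refine ⟨∑ h : P, r h, fun g hg => ?_⟩
  rw [eq_sub_iff_add_eq]
  calc Nat.card P • r g + ρ g (∑ h : P, r h) = ∑ h : P, (r g + ρ g (r h)) := by
        rw [Finset.sum_add_distrib, map_sum, Finset.sum_const, Finset.card_univ,
          Nat.card_eq_fintype_card]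
    _ = ∑ h : P, r (g * h) :=
        Finset.sum_congr rfl fun h _ => (coboundary_eq_zero ρ).1 (hr g hg h h.2)
    _ = ∑ h : P, r h := Fintype.sum_equiv (Equiv.mulLeft ⟨g, hg⟩) _ _ fun h => rfl

/-- The action of `Γ` on the module of a representation, written multiplicatively so as to form a
semidirect product. -/
def multiplicativeAction : Γ →* MulAut (Multiplicative B) where
  toFun g := AddEquiv.toMultiplicative
    { toFun := ρ g
      invFun := ρ g⁻¹
      left_inv := ρ.inv_self_apply g
      right_inv := ρ.self_inv_apply g
      map_add' := map_add (ρ g) }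
  map_one' := by ext; simp
  map_mul' _ _ := by ext; simp

end Coboundary

namespace TriangleGroup

variable {p : ℕ}

/-- The subgroup generated by the two standard generators other than `gen p k`. -/
def pairSubgroup (p : ℕ) (k : Fin 3) : Subgroup (TriangleGroup p) :=
  Subgroup.closure {gen p (k + 1), gen p (k + 2)}

instance [hp : Fact p.Prime] (k : Fin 3) : Finite (pairSubgroup p k) :=
  (isHeisenbergPair_gen _ _).finite_closure hp.out.ne_zero

theorem gen_mem_pairSubgroup {i k : Fin 3} (h : i ≠ k) : gen p i ∈ pairSubgroup p k := by
  have hi : i = k + 1 ∨ i = k + 2 := by revert i k; decide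
  apply Subgroup.subset_closure
  rcases hi with rfl | rfl <;> simp

theorem gen_mem_pairSubgroup_add_one (i : Fin 3) : gen p i ∈ pairSubgroup p (i + 1) :=
  gen_mem_pairSubgroup (by decide +revert)

theorem gen_mem_pairSubgroup_add_two (i : Fin 3) : gen p i ∈ pairSubgroup p (i + 2) :=
  gen_mem_pairSubgroup (by decide +revert)

/-- `TriangleGroup p` is the amalgam of its pair subgroups: every pair of generators lies in some
`pairSubgroup p k`, so the relators already hold there. -/
theorem exists_eqOn_pairSubgroup {Γ : Type*} [Group Γ] {φ : Fin 3 → (TriangleGroup p →* Γ)}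
    (h : ∀ i, φ (i + 1) (gen p i) = φ (i + 2) (gen p i)) :
    ∃ Φ : TriangleGroup p →* Γ, ∀ k, Set.EqOn Φ (φ k) (pairSubgroup p k) := by
  have hφ {i k : Fin 3} (hik : i ≠ k) : φ k (gen p i) = φ (i + 1) (gen p i) := by
    obtain rfl | rfl : k = i + 1 ∨ k = i + 2 := by revert i k; decide
    · rfl
    · exact (h i).symm
  have hpair (i j : Fin 3) : IsHeisenbergPair p (φ (i + 1) (gen p i)) (φ (j + 1) (gen p j)) := by
    obtain ⟨k, hik, hjk⟩ : ∃ k : Fin 3, i ≠ k ∧ j ≠ k := by revert i j; decide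
    rw [← hφ hik, ← hφ hjk]
    exact (isHeisenbergPair_gen i j).map (φ k)
  refine ⟨lift _ hpair, fun k => MonoidHom.eqOn_closure ?_⟩
  have hne₁ : k + 1 ≠ k := by decide +revert
  have hne₂ : k + 2 ≠ k := by decide +revert
  rintro _ (rfl | rfl)
  · exact (lift_gen _ _ _).trans (hφ hne₁).symm
  · exact (lift_gen _ _ _).trans (hφ hne₂).symm

/-- The crossed homomorphisms `g ↦ q k - ρ g (q k)` on the pair subgroups agree on the generators
`gen p i` and hence glue. -/
theorem exists_coboundary_eq_zero {Q : Type*} [AddCommGroup Q]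
    (ρ : Representation ℤ (TriangleGroup p) Q) {q : Fin 3 → Q}
    (hq : ∀ i, ρ (gen p i) (q (i + 1) - q (i + 2)) = q (i + 1) - q (i + 2)) :
    ∃ r : TriangleGroup p → Q, (∀ g h, coboundary ρ r g h = 0) ∧
      ∀ k, ∀ g ∈ pairSubgroup p k, r g = q k - ρ g (q k) := by
  let twist (k : Fin 3) : TriangleGroup p →* Multiplicative Q ⋊[multiplicativeAction ρ] _ :=
    (MulAut.conj (SemidirectProduct.inl (.ofAdd (q k)))).toMonoidHom.comp SemidirectProduct.inr
  have hleft (k : Fin 3) (g : TriangleGroup p) :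
      (twist k g).left = Multiplicative.ofAdd (q k - ρ g (q k)) := by
    simp only [twist, MonoidHom.comp_apply, MulEquiv.coe_toMonoidHom, MulAut.conj_apply,
      ← map_inv, SemidirectProduct.mul_left, SemidirectProduct.mul_right,
      SemidirectProduct.left_inl, SemidirectProduct.right_inl, SemidirectProduct.left_inr,
      SemidirectProduct.right_inr, map_one, mul_one, one_mul]
    rw [map_inv, sub_eq_add_neg]
    rfl
  have hright (k : Fin 3) (g : TriangleGroup p) : (twist k g).right = g := by simp [twist]
  obtain ⟨Φ, hΦ⟩ := exists_eqOn_pairSubgroup (φ := twist) fun i => by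
    refine SemidirectProduct.ext ?_ (by simp only [hright])
    rw [hleft, hleft, Multiplicative.ofAdd.injective.eq_iff]
    have hi := hq i
    rw [map_sub] at hi
    linear_combination (norm := abel) -hi
  have hΦ_right (g : TriangleGroup p) : (Φ g).right = g := by
    have : SemidirectProduct.rightHom.comp Φ = MonoidHom.id _ := by
      refine MonoidHom.eq_of_eqOn_dense closure_range_gen ?_
      rintro _ ⟨i, rfl⟩
      change (Φ (gen p i)).right = gen p i
      rw [hΦ _ (gen_mem_pairSubgroup_add_one i), hright]
    exact DFunLike.congr_fun this g
  refine ⟨fun g => (Φ g).left.toAdd, fun g h => ?_, fun k g hg => ?_⟩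
  · rw [coboundary_eq_zero, map_mul, SemidirectProduct.mul_left, hΦ_right]
    rfl
  · rw [← toAdd_ofAdd (q k - ρ g (q k)), ← hleft, ← hΦ k hg]

theorem exists_isTwoCocycle {S A : Type*} [AddCommGroup S] [AddCommGroup A]
    (σ : Representation ℤ (TriangleGroup p) S) (τ : Representation ℤ (TriangleGroup p) A)
    {j : S →ₗ[ℤ] A} (hj : Function.Injective j) (hjσ : ∀ g s, j (σ g s) = τ g (j s))
    {q : Fin 3 → A} {d : Fin 3 → S} (hq : ∀ i, τ (gen p i) (q (i + 1) - q (i + 2) - j (d i)) =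
      q (i + 1) - q (i + 2) - j (d i)) :
    ∃ (c : TriangleGroup p → TriangleGroup p → S) (m : Fin 3 → TriangleGroup p → S),
      IsTwoCocycle σ c ∧
      (∀ k, ∀ g ∈ pairSubgroup p k, ∀ h ∈ pairSubgroup p k, coboundary σ (m k) g h = c g h) ∧
      ∀ i, m (i + 1) (gen p i) - m (i + 2) (gen p i) = σ (gen p i) (d i) - d i := by
  have hinv (g : TriangleGroup p) : LinearMap.range j ≤ (LinearMap.range j).comap (τ g) := by
    rintro _ ⟨s, rfl⟩
    exact ⟨σ g s, hjσ g s⟩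
  have hmk {a b : A} : (Submodule.Quotient.mk a : A ⧸ LinearMap.range j) = Submodule.Quotient.mk b ↔
      ∃ s, j s = a - b := Submodule.Quotient.eq _
  obtain ⟨r, hr, hrq⟩ := exists_coboundary_eq_zero (τ.quotient _ hinv)
    (q := fun k => Submodule.Quotient.mk (q k)) fun i => hmk.2
      ⟨σ (gen p i) (d i) - d i, by
        have hi := hq i
        simp only [map_sub, hjσ] at hi ⊢
        linear_combination (norm := abel) -hi⟩
  choose ℓ hℓ using fun g => Submodule.Quotient.mk_surjective _ (r g)
  have hc (g h : TriangleGroup p) : ∃ s, j s = coboundary τ ℓ g h := by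
    refine (Submodule.Quotient.mk_eq_zero (LinearMap.range j)).1 (.trans ?_ (hr g h))
    simp only [coboundary, ← hℓ]
    rfl
  choose c hc using hc
  have hm (k : Fin 3) (g : TriangleGroup p) :
      ∃ s, g ∈ pairSubgroup p k → j s = ℓ g - (q k - τ g (q k)) := by
    by_cases hg : g ∈ pairSubgroup p k
    · obtain ⟨s, hs⟩ := hmk.1 ((hℓ g).trans (hrq k g hg))
      exact ⟨s, fun _ => hs⟩
    · exact ⟨0, fun h => absurd h hg⟩
  choose m hm using hm
  refine ⟨c, m, fun g₁ g₂ g₃ => hj ?_, fun k g hg h hh => hj ?_, fun i => hj ?_⟩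
  · simpa only [map_sub, map_add, map_zero, hjσ, hc] using isTwoCocycle_coboundary τ ℓ g₁ g₂ g₃
  · simp only [coboundary, map_sub, map_add, hjσ, hc, hm k g hg, hm k h hh,
      hm k _ (mul_mem hg hh), map_mul, Module.End.mul_apply]
    abel
  · rw [map_sub, hm _ _ (gen_mem_pairSubgroup_add_one i),
      hm _ _ (gen_mem_pairSubgroup_add_two i)]
    have hi := hq i
    simp only [map_sub, hjσ] at hi ⊢
    linear_combination (norm := abel) hi

theorem exists_apply_gen_eq_and_sum_eq [Fact p.Prime] {B : Type*} [AddCommGroup B]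
    (ρ : Representation ℤ (TriangleGroup p) B) {β : TriangleGroup p → B}
    {m : Fin 3 → TriangleGroup p → B} {d : Fin 3 → B}
    (hm : ∀ k, ∀ g ∈ pairSubgroup p k, ∀ h ∈ pairSubgroup p k,
      coboundary ρ (m k) g h = coboundary ρ β g h)
    (hd : ∀ i, m (i + 1) (gen p i) - m (i + 2) (gen p i) = ρ (gen p i) (d i) - d i) :
    ∃ (K : ℕ) (f : Fin 3 → B), 0 < K ∧ (∀ i, ρ (gen p i) (f i) = f i) ∧
      ∑ i, f i = K • ∑ i, d i := by
  have hr (k : Fin 3) : ∀ g ∈ pairSubgroup p k, ∀ h ∈ pairSubgroup p k,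
      coboundary ρ (fun g => m k g - β g) g h = 0 := fun g hg h hh => by
    rw [← sub_eq_zero.2 (hm k g hg h hh)]
    simp only [coboundary, map_sub]
    abel
  let K := ∏ k, Nat.card (pairSubgroup p k)
  have hR (k : Fin 3) : ∃ R : B, ∀ g ∈ pairSubgroup p k, K • (m k g - β g) = R - ρ g R := by
    obtain ⟨R, hR⟩ := exists_card_nsmul_eq_sub ρ (hr k)
    obtain ⟨n, hn⟩ : Nat.card (pairSubgroup p k) ∣ K := Finset.dvd_prod_of_mem _ (Finset.mem_univ k)
    refine ⟨n • R, fun g hg => ?_⟩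
    rw [hn, mul_comm, mul_smul, hR g hg, smul_sub, map_nsmul]
  choose R hR using hR
  refine ⟨K, fun i => R (i + 1) - R (i + 2) + K • d i, Finset.prod_pos fun k _ => Nat.card_pos,
    fun i => ?_, ?_⟩
  · have h₁ := hR (i + 1) _ (gen_mem_pairSubgroup_add_one i)
    have h₂ := hR (i + 2) _ (gen_mem_pairSubgroup_add_two i)
    have h₃ := congrArg (K • ·) (hd i)
    simp only [smul_sub, map_add, map_sub, map_nsmul] at h₁ h₂ h₃ ⊢
    linear_combination (norm := abel) h₁ - h₂ - h₃
  · have hsum : ∑ i, R (i + 1) = ∑ i, R (i + 2) :=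
      (Equiv.sum_comp (Equiv.addRight 1) R).trans (Equiv.sum_comp (Equiv.addRight 2) R).symm
    rw [Finset.sum_add_distrib, Finset.sum_sub_distrib, hsum, sub_self, zero_add, Finset.smul_sum]

/-- Left translation on integer-valued functions. -/
def funTranslation (Γ : Type*) [Group Γ] : Representation ℤ Γ (Γ → ℤ) where
  toFun g := LinearMap.funLeft ℤ ℤ (g⁻¹ * ·)
  map_one' := by ext f h; simp
  map_mul' g₁ g₂ := by ext f h; simp [LinearMap.funLeft, mul_assoc]

theorem exists_isTwoCocycle_coboundary_leftRegular [Fact p.Prime] :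
    ∃ (c : TriangleGroup p → TriangleGroup p → MonoidAlgebra ℤ (TriangleGroup p))
      (m : Fin 3 → TriangleGroup p → MonoidAlgebra ℤ (TriangleGroup p))
      (d : Fin 3 → MonoidAlgebra ℤ (TriangleGroup p)),
      IsTwoCocycle (.leftRegular ℤ (TriangleGroup p)) c ∧
      (∀ k, ∀ g ∈ pairSubgroup p k, ∀ h ∈ pairSubgroup p k,
        coboundary (.leftRegular ℤ (TriangleGroup p)) (m k) g h = c g h) ∧
      (∀ i, m (i + 1) (gen p i) - m (i + 2) (gen p i) =
        Representation.leftRegular ℤ (TriangleGroup p) (gen p i) (d i) - d i) ∧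
      ∑ i, d i = 1 := by
  obtain ⟨n, hn, hsum⟩ := exists_sum_eq (p := p) (Finsupp.single 1 (1 : ℤ))
  let j : MonoidAlgebra ℤ (TriangleGroup p) →ₗ[ℤ] TriangleGroup p → ℤ :=
    Finsupp.lcoeFun ∘ₗ (MonoidAlgebra.coeffLinearEquiv ℤ).toLinearMap
  have hnfix (i : Fin 3) : funTranslation _ (gen p i) (n i) = n i := by
    funext g
    refine (hn i ((gen p i)⁻¹ * g)).symm.trans ?_
    rw [mul_inv_cancel_left]
  let q : Fin 3 → TriangleGroup p → ℤ := ![n 1, -n 0, 0]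
  let d : Fin 3 → MonoidAlgebra ℤ (TriangleGroup p) := Pi.single 2 1
  have hqd (i : Fin 3) : q (i + 1) - q (i + 2) - j (d i) = -n i := by
    have hone : j 1 = n 0 + n 1 + n 2 := by
      funext g
      rw [← Fin.sum_univ_three, Finset.sum_apply, hsum]
      rfl
    fin_cases i
    · simp [q, d]
    · simp [q, d]
    · change n 1 - -n 0 - j 1 = -n 2
      rw [hone]
      abel
  obtain ⟨c, m, hc, hm, hmd⟩ := exists_isTwoCocycle (.leftRegular ℤ (TriangleGroup p))
    (funTranslation (TriangleGroup p)) (j := j)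
    (DFunLike.coe_injective.comp (MonoidAlgebra.coeffLinearEquiv ℤ).injective)
    (fun g s => funext fun h => Representation.coeff_ofMulAction g s h)
    (q := q) (d := d) fun i => by rw [hqd, map_neg, hnfix]
  exact ⟨c, m, d, hc, hm, hmd, Fintype.sum_pi_single' 2 1⟩

/-- A cocycle with values in the group ring which becomes a coboundary in a module only if a
positive multiple of the image of `1` is a sum of vectors fixed by the three generators. -/
theorem exists_isTwoCocycle_leftRegular [Fact p.Prime] :
    ∃ c : TriangleGroup p → TriangleGroup p → MonoidAlgebra ℤ (TriangleGroup p),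
      IsTwoCocycle (.leftRegular ℤ (TriangleGroup p)) c ∧
      ∀ {B : Type*} [AddCommGroup B] (ρ : Representation ℤ (TriangleGroup p) B) (b : B)
        (β : TriangleGroup p → B), (∀ g h, ρ.asAlgebraHom (c g h) b = coboundary ρ β g h) →
        ∃ (K : ℕ) (f : Fin 3 → B), 0 < K ∧ (∀ i, ρ (gen p i) (f i) = f i) ∧
          ∑ i, f i = K • b := by
  obtain ⟨c, m, d, hc, hm, hmd, hd⟩ := exists_isTwoCocycle_coboundary_leftRegular (p := p)
  refine ⟨c, hc, fun ρ b β hβ => ?_⟩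
  have hρ (g s) : ρ.asAlgebraHom (Representation.leftRegular ℤ (TriangleGroup p) g s) b =
      ρ g (ρ.asAlgebraHom s b) := by rw [asAlgebraHom_leftRegular, Module.End.mul_apply]
  obtain ⟨K, f, hK, hf, hsum⟩ := exists_apply_gen_eq_and_sum_eq ρ (β := β)
    (m := fun k g => ρ.asAlgebraHom (m k g) b) (d := fun i => ρ.asAlgebraHom (d i) b)
    (fun k g hg h hh => by
      rw [← hβ, ← hm k g hg h hh]
      simp only [coboundary, map_sub, map_add, LinearMap.sub_apply, LinearMap.add_apply, hρ])
    fun i => by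
      rw [← hρ, ← LinearMap.sub_apply, ← LinearMap.sub_apply, ← map_sub, ← map_sub, hmd]
  refine ⟨K, f, hK, hf, ?_⟩
  rw [hsum, ← LinearMap.sum_apply, ← map_sum, hd, map_one, Module.End.one_apply]

end TriangleGroup

section HilbertTensorSquare

open UniformSpace

section CompletionCongr

variable {E : Type*} [NormedAddCommGroup E] [InnerProductSpace ℂ E]

/-- The extension of a unitary of an inner product space to the completion. -/
def completionCongr (e : E ≃ₗᵢ[ℂ] E) : Completion E ≃ₗᵢ[ℂ] Completion E :=
  e.toLinearEquiv.extendOfIsometry Completion.toComplₗᵢ.toLinearMap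
    Completion.toComplₗᵢ.toLinearMap Completion.denseRange_coe Completion.denseRange_coe
    fun x => by simp

theorem completionCongr_coe (e : E ≃ₗᵢ[ℂ] E) (x : E) : completionCongr e x = e x :=
  LinearEquiv.extendOfIsometry_eq ..

end CompletionCongr

variable (H : Type*) [NormedAddCommGroup H] [InnerProductSpace ℂ H]

/-- The Hilbert space tensor product of `H` with itself. -/
abbrev HilbertTensorSquare := Completion (H ⊗[ℂ] H)

/-- The elementary tensors, as a bounded bilinear map into the Hilbert tensor square. -/
def hilbertTMul : H →L[ℂ] H →L[ℂ] HilbertTensorSquare H :=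
  (ContinuousLinearMap.compL ℂ H (H ⊗[ℂ] H) _ Completion.toComplL).comp (TensorProduct.mkL ℂ H H)

variable {H}

theorem inner_hilbertTMul (v w v' w' : H) :
    ⟪hilbertTMul H v w, hilbertTMul H v' w'⟫_ℂ = ⟪v, v'⟫_ℂ * ⟪w, w'⟫_ℂ :=
  (Completion.inner_coe _ _).trans (TensorProduct.inner_tmul ..)

theorem norm_hilbertTMul (v w : H) : ‖hilbertTMul H v w‖ = ‖v‖ * ‖w‖ :=
  (Completion.norm_coe _).trans (TensorProduct.norm_tmul ..)

theorem hilbertTensorSquare_hom_ext {S T : HilbertTensorSquare H ≃ₗᵢ[ℂ] HilbertTensorSquare H}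
    (h : ∀ v w, S (hilbertTMul H v w) = T (hilbertTMul H v w)) : S = T := by
  refine LinearIsometryEquiv.ext fun x =>
    Completion.induction_on x (isClosed_eq S.continuous T.continuous) fun a => ?_
  induction a using TensorProduct.induction_on with
  | zero => rw [Completion.coe_zero, map_zero, map_zero]
  | tmul v w => exact h v w
  | add a b ha hb => rw [Completion.coe_add, map_add, map_add, ha, hb]

theorem completionCongr_congrIsometry_hilbertTMul (u v : H ≃ₗᵢ[ℂ] H) (x y : H) :
    completionCongr (TensorProduct.congrIsometry u v) (hilbertTMul H x y) =
      hilbertTMul H (u x) (v y) :=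
  completionCongr_coe _ _

/-- The action of pairs of unitaries on the Hilbert tensor square. -/
def hilbertTensorMap :
    (H ≃ₗᵢ[ℂ] H) × (H ≃ₗᵢ[ℂ] H) →* (HilbertTensorSquare H ≃ₗᵢ[ℂ] HilbertTensorSquare H) where
  toFun u := completionCongr (TensorProduct.congrIsometry u.1 u.2)
  map_one' := hilbertTensorSquare_hom_ext fun _ _ =>
    completionCongr_congrIsometry_hilbertTMul _ _ _ _
  map_mul' u v := hilbertTensorSquare_hom_ext fun x y => by
    simp only [LinearIsometryEquiv.mul_def, LinearIsometryEquiv.trans_apply,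
      completionCongr_congrIsometry_hilbertTMul, Prod.fst_mul, Prod.snd_mul]

theorem hilbertTensorMap_tmul (u v : H ≃ₗᵢ[ℂ] H) (x y : H) :
    hilbertTensorMap (u, v) (hilbertTMul H x y) = hilbertTMul H (u x) (v y) :=
  completionCongr_congrIsometry_hilbertTMul _ _ _ _

end HilbertTensorSquare

section PosPart

variable {H : Type*} [NormedAddCommGroup H] [InnerProductSpace ℂ H] [CompleteSpace H]
  {T : H →L[ℂ] H} {ω : H}

theorem posPart_apply_ne_zero (hT : IsSelfAdjoint T) (hω : 0 < (⟪T ω, ω⟫_ℂ).re) : T⁺ ω ≠ 0 := by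
  intro h
  have hneg :=
    ((ContinuousLinearMap.nonneg_iff_isPositive _).1 (CFC.negPart_nonneg T)).re_inner_nonneg_left ω
  rw [← CFC.posPart_sub_negPart T hT, sub_apply, h, zero_sub, inner_neg_left, Complex.neg_re] at hω
  exact (neg_pos.1 hω).not_ge hneg

/-- If a self-adjoint operator is negative definite on the hyperplane `ωᗮ`, then its positive part
has rank at most one. -/
theorem exists_posPart_apply_eq_smul (hT : IsSelfAdjoint T)
    (hneg : ∀ v, ⟪ω, v⟫_ℂ = 0 → v ≠ 0 → (⟪T v, v⟫_ℂ).re < 0) (x : H) :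
    ∃ c : ℂ, T⁺ x = c • T⁺ ω := by
  have hzero {z : H} (hz : ⟪ω, T⁺ z⟫_ℂ = 0) : T⁺ z = 0 := by
    by_contra h
    have hpos := ((ContinuousLinearMap.nonneg_iff_isPositive _).1
      (CFC.posPart_nonneg T)).re_inner_nonneg_left (T⁺ z)
    have hmul : T⁻ (T⁺ z) = 0 := DFunLike.congr_fun (CFC.negPart_mul_posPart T) z
    have heq : T (T⁺ z) = T⁺ (T⁺ z) := by
      rw [← sub_zero (T⁺ (T⁺ z)), ← hmul, ← sub_apply, CFC.posPart_sub_negPart T hT]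
    exact (hneg _ hz h).not_ge (heq ▸ hpos)
  by_cases hω : ⟪ω, T⁺ ω⟫_ℂ = 0
  · have hx : ⟪ω, T⁺ x⟫_ℂ = 0 := by
      rw [← (ContinuousLinearMap.isSelfAdjoint_iff_isSymmetric.1
        (CFC.posPart_nonneg T).isSelfAdjoint).apply_clm ω x, hzero hω, inner_zero_left]
    exact ⟨0, by rw [hzero hx, zero_smul]⟩
  · refine ⟨⟪ω, T⁺ x⟫_ℂ / ⟪ω, T⁺ ω⟫_ℂ, ?_⟩
    rw [← sub_eq_zero, ← map_smul, ← map_sub]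
    refine hzero ?_
    rw [map_sub, map_smul, inner_sub_right, inner_smul_right, div_mul_cancel₀ _ hω, sub_self]

theorem conjStarAlgEquiv_posPart (u : H ≃ₗᵢ[ℂ] H) (hT : IsSelfAdjoint T) :
    u.conjStarAlgEquiv T⁺ = (u.conjStarAlgEquiv T)⁺ := by
  rw [CFC.posPart_def, CFC.posPart_def]
  exact NonUnitalStarAlgHomClass.map_cfcₙ u.conjStarAlgEquiv _ T

end PosPart

section Contraction

variable {H E : Type*} [NormedAddCommGroup H] [InnerProductSpace ℂ H] [CompleteSpace H]
  [NormedAddCommGroup E] [InnerProductSpace ℂ E]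

/-- The conjugate-linear operator on `H` obtained by contracting a vector `ξ` against the first
argument of a bilinear map `T`, so that `⟪contraction T ξ v, w⟫ = ⟪ξ, T v w⟫`. -/
def contraction (T : H →L[ℂ] H →L[ℂ] E) (ξ : E) : H →L⋆[ℂ] H :=
  ((InnerProductSpace.toDual ℂ H).symm.toContinuousLinearEquiv : (H →L[ℂ] ℂ) →L⋆[ℂ] H).comp
    ((ContinuousLinearMap.compL ℂ H E ℂ (innerSL ℂ ξ)).comp T)

variable {T : H →L[ℂ] H →L[ℂ] E} {ξ : E}

theorem inner_contraction (T : H →L[ℂ] H →L[ℂ] E) (ξ : E) (v w : H) :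
    ⟪contraction T ξ v, w⟫_ℂ = ⟪ξ, T v w⟫_ℂ :=
  InnerProductSpace.toDual_symm_apply

theorem contraction_sub (ξ η : E) : contraction T (ξ - η) = contraction T ξ - contraction T η := by
  ext v
  refine ext_inner_right ℂ fun w => ?_
  simp only [sub_apply, inner_sub_left, inner_contraction]

theorem norm_contraction_apply_le (hT : ∀ v w, ‖T v w‖ ≤ ‖v‖ * ‖w‖) (ξ : E) (v : H) :
    ‖contraction T ξ v‖ ≤ ‖ξ‖ * ‖v‖ := by
  refine ((InnerProductSpace.toDual ℂ H).symm.norm_map _).trans_le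
    (ContinuousLinearMap.opNorm_le_bound _ (by positivity) fun w => ?_)
  calc ‖⟪ξ, T v w⟫_ℂ‖ ≤ ‖ξ‖ * ‖T v w‖ := norm_inner_le_norm _ _
    _ ≤ ‖ξ‖ * ‖v‖ * ‖w‖ := by grw [hT, mul_assoc]

theorem contraction_apply_of_equivariant {Φ : E ≃ₗᵢ[ℂ] E} {u v : H ≃ₗᵢ[ℂ] H}
    (hΦ : ∀ x y, Φ (T x y) = T (u x) (v y)) (ξ : E) (x : H) :
    contraction T (Φ ξ) (u x) = v (contraction T ξ x) := by
  refine ext_inner_right ℂ fun y => ?_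
  obtain ⟨y, rfl⟩ := v.surjective y
  rw [inner_contraction, ← hΦ, Φ.inner_map_map, v.inner_map_map, inner_contraction]

end Contraction

section SpectralCutoff

variable {H : Type*} [NormedAddCommGroup H] [InnerProductSpace ℂ H] [CompleteSpace H]

/-- The positive operator `C* C` on `H`, where `C` is the conjugate-linear operator corresponding to
the tensor `ξ`. -/
def gramOperator (ξ : HilbertTensorSquare H) : H →L[ℂ] H :=
  (contraction (hilbertTMul H).flip ξ).comp (contraction (hilbertTMul H) ξ)

/-- The part of `gramOperator ξ` above the spectral value `1 / 2`; it has rank one for `ξ` close to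
`ω ⊗ ω` with `ω` a unit vector. -/
def spectralCutoff (ξ : HilbertTensorSquare H) : H →L[ℂ] H :=
  (gramOperator ξ - (1 / 2 : ℝ) • 1)⁺

theorem inner_gramOperator (ξ : HilbertTensorSquare H) (v w : H) :
    ⟪gramOperator ξ v, w⟫_ℂ =
      ⟪contraction (hilbertTMul H) ξ w, contraction (hilbertTMul H) ξ v⟫_ℂ := by
  simp only [gramOperator, ContinuousLinearMap.comp_apply, inner_contraction,
    ContinuousLinearMap.flip_apply]

theorem isSelfAdjoint_gramOperator_sub (ξ : HilbertTensorSquare H) (c : ℝ) :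
    IsSelfAdjoint (gramOperator ξ - c • 1) := by
  refine .sub (ContinuousLinearMap.isSelfAdjoint_iff_isSymmetric.2 fun v w => ?_)
    (.smul (.all c) (.one _))
  exact (inner_gramOperator ξ v w).trans ((inner_conj_symm _ _).symm.trans
    ((congrArg _ (inner_gramOperator ξ w v)).symm.trans (inner_conj_symm _ _)))

theorem re_inner_gramOperator_sub_smul_one (ξ : HilbertTensorSquare H) (c : ℝ) (v : H) :
    (⟪(gramOperator ξ - c • 1) v, v⟫_ℂ).re =
      ‖contraction (hilbertTMul H) ξ v‖ ^ 2 - c * ‖v‖ ^ 2 := by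
  rw [sub_apply, smul_apply, one_apply_eq_self, inner_sub_left, inner_gramOperator,
    ← Complex.coe_smul, inner_smul_left, inner_self_eq_norm_sq_to_K, inner_self_eq_norm_sq_to_K]
  simp [← Complex.ofReal_pow]

theorem gramOperator_hilbertTensorMap_apply (u v : H ≃ₗᵢ[ℂ] H) (ξ : HilbertTensorSquare H)
    (x : H) : gramOperator (hilbertTensorMap (u, v) ξ) (u x) = u (gramOperator ξ x) := by
  simp only [gramOperator, ContinuousLinearMap.comp_apply]
  rw [contraction_apply_of_equivariant (hilbertTensorMap_tmul u v),
    contraction_apply_of_equivariant (u := v) (v := u) fun x y => hilbertTensorMap_tmul u v y x]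

theorem spectralCutoff_hilbertTensorMap_apply (u v : H ≃ₗᵢ[ℂ] H) (ξ : HilbertTensorSquare H)
    (x : H) : spectralCutoff (hilbertTensorMap (u, v) ξ) (u x) = u (spectralCutoff ξ x) := by
  have h : u.conjStarAlgEquiv (gramOperator ξ - (1 / 2 : ℝ) • 1) =
      gramOperator (hilbertTensorMap (u, v) ξ) - (1 / 2 : ℝ) • 1 := by
    ext y
    obtain ⟨y, rfl⟩ := u.surjective y
    simp only [LinearIsometryEquiv.conjStarAlgEquiv_apply_apply, u.symm_apply_apply, sub_apply,
      gramOperator_hilbertTensorMap_apply, smul_apply, one_apply_eq_self, map_sub]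
    rw [← Complex.coe_smul, map_smul, Complex.coe_smul]
  rw [spectralCutoff, ← h, ← conjStarAlgEquiv_posPart u (isSelfAdjoint_gramOperator_sub ξ _),
    LinearIsometryEquiv.conjStarAlgEquiv_apply_apply, u.symm_apply_apply, spectralCutoff]

variable {ω : H} {ξ : HilbertTensorSquare H}

theorem contraction_hilbertTMul_apply (x y v : H) :
    contraction (hilbertTMul H) (hilbertTMul H x y) v = ⟪v, x⟫_ℂ • y := by
  refine ext_inner_right ℂ fun w => ?_
  rw [inner_contraction, inner_hilbertTMul, inner_smul_left, inner_conj_symm]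

theorem norm_contraction_hilbertTMul_sub_apply_le
    (hξ : ‖ξ - hilbertTMul H ω ω‖ ≤ 1 / 4) (v : H) :
    ‖contraction (hilbertTMul H) ξ v - ⟪v, ω⟫_ℂ • ω‖ ≤ 1 / 4 * ‖v‖ := by
  rw [← contraction_hilbertTMul_apply, ← sub_apply, ← contraction_sub]
  exact (norm_contraction_apply_le (fun v w => (norm_hilbertTMul v w).le) _ v).trans (by gcongr)

theorem spectralCutoff_apply_ne_zero (hω : ‖ω‖ = 1) (hξ : ‖ξ - hilbertTMul H ω ω‖ ≤ 1 / 4) :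
    spectralCutoff ξ ω ≠ 0 := by
  refine posPart_apply_ne_zero (isSelfAdjoint_gramOperator_sub ξ _) ?_
  rw [re_inner_gramOperator_sub_smul_one, hω]
  have h := norm_contraction_hilbertTMul_sub_apply_le hξ ω
  rw [inner_self_eq_norm_sq_to_K, hω, RCLike.ofReal_one, one_pow, one_smul, mul_one] at h
  have hge : 3 / 4 ≤ ‖contraction (hilbertTMul H) ξ ω‖ := by
    linarith [norm_le_norm_add_norm_sub (contraction (hilbertTMul H) ξ ω) ω]
  nlinarith

theorem exists_spectralCutoff_apply_eq_smul (hξ : ‖ξ - hilbertTMul H ω ω‖ ≤ 1 / 4) (x : H) :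
    ∃ c : ℂ, spectralCutoff ξ x = c • spectralCutoff ξ ω := by
  refine exists_posPart_apply_eq_smul (isSelfAdjoint_gramOperator_sub ξ _) (fun v hv hv0 => ?_) x
  have h := norm_contraction_hilbertTMul_sub_apply_le hξ v
  rw [← inner_conj_symm, hv, map_zero, zero_smul, sub_zero] at h
  rw [re_inner_gramOperator_sub_smul_one]
  have : 0 < ‖v‖ := norm_pos_iff.2 hv0
  nlinarith [norm_nonneg (contraction (hilbertTMul H) ξ v)]

end SpectralCutoff

namespace IsHeisenbergPair

variable {Γ Γ' : Type*} [Group Γ] [Group Γ'] {p : ℕ}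

theorem prodMk {x y : Γ} (h : IsHeisenbergPair p x y) {z : Γ'} (hz : z ^ p = 1) :
    IsHeisenbergPair p (x, z) (y, z) := by
  have hcomm : ⁅(x, z), (y, z)⁆ = (⁅x, y⁆, 1) := by simp [commutatorElement_def]
  exact ⟨Prod.ext h.pow_left hz, Prod.ext h.pow_right hz,
    hcomm ▸ h.commute_left.prod (Commute.one_right z),
    hcomm ▸ h.commute_right.prod (Commute.one_right z)⟩

theorem mulAutConj {x y : Γ} (h : IsHeisenbergPair p x y) (a : Γ) :
    IsHeisenbergPair p (a * x * a⁻¹) (a * y * a⁻¹) :=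
  h.map (MulAut.conj a).toMonoidHom

variable {u a : Fin 3 → Γ}

theorem conj_one_eq_conj_zero (ha : ∀ i, Commute (a i) (u i)) (h : a 0 * a 1 * a 2 = 1) :
    a 1 * u 2 * (a 1)⁻¹ = (a 0)⁻¹ * u 2 * a 0 := by
  have h01 : a 0 * a 1 = (a 2)⁻¹ := eq_inv_of_mul_eq_one_left h
  calc a 1 * u 2 * (a 1)⁻¹ = (a 0)⁻¹ * ((a 0 * a 1) * u 2 * (a 0 * a 1)⁻¹) * a 0 := by group
    _ = (a 0)⁻¹ * u 2 * a 0 := by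
      rw [h01, (ha 2).inv_left.eq, mul_inv_cancel_right]

theorem conj_last (hu : ∀ i j, IsHeisenbergPair p (u i) (u j))
    (ha : ∀ i, Commute (a i) (u i)) (h : a 0 * a 1 * a 2 = 1) (i j : Fin 3) :
    IsHeisenbergPair p (![u 0, u 1, a 1 * u 2 * (a 1)⁻¹] i)
      (![u 0, u 1, a 1 * u 2 * (a 1)⁻¹] j) := by
  have h12 : IsHeisenbergPair p (u 1) (a 1 * u 2 * (a 1)⁻¹) := by
    simpa only [(ha 1).eq, mul_inv_cancel_right] using (hu 1 2).mulAutConj (a 1)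
  have h02 : IsHeisenbergPair p (u 0) (a 1 * u 2 * (a 1)⁻¹) := by
    rw [conj_one_eq_conj_zero ha h]
    simpa only [inv_inv, mul_assoc, ← (ha 0).eq, inv_mul_cancel_left] using
      (hu 0 2).mulAutConj (a 0)⁻¹
  fin_cases i <;> fin_cases j
  exacts [hu 0 0, hu 0 1, h02, hu 1 0, hu 1 1, h12, h02.symm, h12.symm, (hu 2 2).mulAutConj (a 1)]

end IsHeisenbergPair

section FixedVectors

variable {H : Type*} [NormedAddCommGroup H] [InnerProductSpace ℂ H]

theorem norm_inv_apply_sub (u : H ≃ₗᵢ[ℂ] H) (x : H) : ‖u⁻¹ x - x‖ = ‖u x - x‖ := by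
  rw [← u.norm_map, map_sub, norm_sub_rev]
  exact congrArg (‖u x - ·‖) (u.apply_symm_apply x)

theorem norm_apply_sub_le (u : H ≃ₗᵢ[ℂ] H) (x y : H) : ‖u x - y‖ ≤ ‖x - y‖ + ‖u y - y‖ := by
  refine (norm_sub_le_norm_sub_add_norm_sub _ (u y) _).trans_eq ?_
  rw [← map_sub, u.norm_map]

theorem apply_apply_eq_of_commute {a u : H ≃ₗᵢ[ℂ] H} (h : Commute a u) {x : H} (hx : u x = x) :
    u (a x) = a x :=
  (DFunLike.congr_fun h.eq x).symm.trans (congrArg a hx)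

theorem exists_compatible_fixed_vectors [CompleteSpace H] {p : ℕ} (hp : p.Prime) (hp16 : 16 ≤ p)
    {U A : Fin 3 → H ≃ₗᵢ[ℂ] H} (hU : ∀ i j, IsHeisenbergPair p (U i) (U j))
    (hA : ∀ i, Commute (A i) (U i)) (hprod : A 0 * A 1 * A 2 = 1) {ω : H} {ε : ℝ}
    (hUω : ∀ i, U i ω = ω) (hAω : ∀ i, ‖A i ω - ω‖ ≤ ε) :
    ∃ x : Fin 3 → H, (∀ i j, i ≠ j → U i (x j) = x j) ∧ (∀ i, A i (x (i + 2)) = x (i + 1)) ∧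
      ∀ i, ‖x i - ω‖ ≤ (6 * p + 1) * ε := by
  have hε : 0 ≤ ε := (norm_nonneg _).trans (hAω 0)
  have hdisp (i : Fin 3) : ‖![U 0, U 1, A 1 * U 2 * (A 1)⁻¹] i ω - ω‖ ≤ 2 * ε := by
    fin_cases i
    · simpa [hUω] using hε
    · simpa [hUω] using hε
    · calc ‖A 1 (U 2 ((A 1)⁻¹ ω)) - ω‖ ≤ ‖U 2 ((A 1)⁻¹ ω) - ω‖ + ‖A 1 ω - ω‖ :=
            norm_apply_sub_le ..
        _ ≤ ‖(A 1)⁻¹ ω - ω‖ + ‖U 2 ω - ω‖ + ‖A 1 ω - ω‖ := by grw [norm_apply_sub_le]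
        _ ≤ 2 * ε := by
          rw [norm_inv_apply_sub, hUω, sub_self, norm_zero]
          linarith [hAω 1]
  obtain ⟨η, hη, hηω⟩ := exists_forall_apply_eq_and_norm_sub_le hp hp16
    (IsHeisenbergPair.conj_last hU hA hprod) hdisp
  have hη0 : U 0 η = η := hη 0
  have hη1 : U 1 η = η := hη 1
  have hη2 : (A 1 * U 2 * (A 1)⁻¹) η = η := hη 2
  have hη2' : ((A 0)⁻¹ * U 2 * A 0) η = η := by
    rwa [← IsHeisenbergPair.conj_one_eq_conj_zero hA hprod]
  rw [norm_sub_rev] at hηω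
  have hnear : ‖η - ω‖ + ε ≤ (6 * p + 1) * ε := by linarith
  refine ⟨![(A 1)⁻¹ η, A 0 η, η], ?_, ?_, ?_⟩
  · intro i j hij
    fin_cases i <;> fin_cases j <;> try exact absurd rfl hij
    exacts [apply_apply_eq_of_commute (hA 0) hη0, hη0,
      apply_apply_eq_of_commute (hA 1).inv_left hη1, hη1,
      (A 1).injective (hη2.trans ((A 1).apply_symm_apply η).symm),
      (A 0).symm.injective (hη2'.trans ((A 0).symm_apply_apply η).symm)]
  · have h120 : A 1 * A 2 * A 0 = 1 := by
      rw [mul_eq_one_iff_eq_inv, eq_comm, inv_eq_iff_mul_eq_one, ← mul_assoc, hprod]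
    intro i
    fin_cases i
    exacts [rfl, (A 1).apply_symm_apply η,
      (A 1).injective ((DFunLike.congr_fun h120 η).trans ((A 1).apply_symm_apply η).symm)]
  · intro i
    fin_cases i
    · exact (norm_apply_sub_le _ _ _).trans (by grw [norm_inv_apply_sub, hAω, hnear])
    · exact (norm_apply_sub_le _ _ _).trans (by grw [hAω, hnear])
    · exact (le_add_of_nonneg_right hε).trans hnear

end FixedVectors

section DirectSum

variable {ι E : Type*} [Fintype ι] [NormedAddCommGroup E] [InnerProductSpace ℂ E]

/-- The unitaries of `ℓ²(ι, E)` acting coordinatewise. -/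
def diagonalUnitary :
    (ι → E ≃ₗᵢ[ℂ] E) →* (PiLp 2 (fun _ : ι => E) ≃ₗᵢ[ℂ] PiLp 2 (fun _ : ι => E)) where
  toFun u := LinearIsometryEquiv.piLpCongrRight 2 u
  map_one' := by ext; rfl
  map_mul' u v := by ext; rfl

/-- The unitaries of `ℓ²(ZMod p, E)` that permute the coordinates by a translation. -/
def cyclicShift {p : ℕ} [NeZero p] : Multiplicative (ZMod p) →*
    (PiLp 2 (fun _ : ZMod p => E) ≃ₗᵢ[ℂ] PiLp 2 (fun _ : ZMod p => E)) where
  toFun a := LinearIsometryEquiv.piLpCongrLeft 2 ℂ E (Equiv.addRight a.toAdd)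
  map_one' := by
    ext x k
    exact congrArg x (by simp [Equiv.Perm.one_def])
  map_mul' a b := by
    ext x k
    exact congrArg x (by simp [← Equiv.Perm.inv_def, add_assoc, add_comm, add_left_comm])

theorem cyclicShift_apply {p : ℕ} [NeZero p] (a : Multiplicative (ZMod p))
    (x : PiLp 2 (fun _ : ZMod p => E)) (k : ZMod p) : cyclicShift a x k = x (k - a.toAdd) :=
  congrArg x (sub_eq_add_neg k _).symm

omit [InnerProductSpace ℂ E] in
theorem norm_le_card_mul_of_forall_norm_apply_le {x : PiLp 2 (fun _ : ι => E)} {M : ℝ}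
    (h : ∀ i, ‖x i‖ ≤ M) : ‖x‖ ≤ Fintype.card ι * M := by
  calc ‖x‖ = √(∑ i, ‖x i‖ ^ 2) := PiLp.norm_eq_of_L2 x
    _ ≤ ∑ i, ‖x i‖ := Real.sqrt_le_iff.2
      ⟨Finset.sum_nonneg fun i _ => norm_nonneg _,
        Finset.sum_sq_le_sq_sum_of_nonneg fun i _ => norm_nonneg _⟩
    _ ≤ Fintype.card ι * M := by
      rw [← nsmul_eq_mul]
      exact Finset.sum_le_card_nsmul _ _ _ fun i _ => h i

end DirectSum

section ShiftedTensorSquare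

variable {H : Type*} [NormedAddCommGroup H] [InnerProductSpace ℂ H] {p : ℕ} [NeZero p]

/-- The representation on `ℓ²(ZMod p, H ⊗ H)` by diagonal tensor squares combined with cyclic shifts
of the coordinates. -/
def tensorSquareShift : (H ≃ₗᵢ[ℂ] H) × Multiplicative (ZMod p) →*
    (PiLp 2 (fun _ : ZMod p => HilbertTensorSquare H) ≃ₗᵢ[ℂ]
      PiLp 2 (fun _ : ZMod p => HilbertTensorSquare H)) :=
  MonoidHom.noncommCoprod
    (diagonalUnitary.comp <| (Pi.constMonoidHom (ZMod p) _).comp <|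
      hilbertTensorMap.comp <| .prod (.id _) (.id _))
    cyclicShift fun _ _ => LinearIsometryEquiv.ext fun _ => rfl

theorem tensorSquareShift_apply_add_one (u : H ≃ₗᵢ[ℂ] H)
    (x : PiLp 2 (fun _ : ZMod p => HilbertTensorSquare H)) (k : ZMod p) :
    tensorSquareShift (u, .ofAdd 1) x (k + 1) = hilbertTensorMap (u, u) (x k) := by
  change hilbertTensorMap (u, u) (cyclicShift (.ofAdd 1) x (k + 1)) = _
  rw [cyclicShift_apply, toAdd_ofAdd, add_sub_cancel_right]

theorem hilbertTensorMap_inv_right_eq_one {u : H ≃ₗᵢ[ℂ] H} {c : ℂ} (h : ∀ x, u x = c • x) :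
    hilbertTensorMap (u, u⁻¹) = 1 := by
  refine hilbertTensorSquare_hom_ext fun x y => ?_
  rw [hilbertTensorMap_tmul, h, map_smul, smul_apply, ← map_smul, ← h]
  exact congrArg _ (u.apply_symm_apply y)

theorem norm_hilbertTensorMap_inv_right_sub_le {ω : H} (hω : ‖ω‖ = 1) (u : H ≃ₗᵢ[ℂ] H) :
    ‖hilbertTensorMap (u, u⁻¹) (hilbertTMul H ω ω) - hilbertTMul H ω ω‖ ≤ 2 * ‖u ω - ω‖ := by
  have hsplit : hilbertTMul H (u ω) (u⁻¹ ω) - hilbertTMul H ω ω =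
      hilbertTMul H (u ω - ω) (u⁻¹ ω) + hilbertTMul H ω (u⁻¹ ω - ω) := by
    simp only [map_sub, sub_apply, sub_add_sub_cancel]
  calc _ = ‖hilbertTMul H (u ω - ω) (u⁻¹ ω) + hilbertTMul H ω (u⁻¹ ω - ω)‖ := by
        rw [hilbertTensorMap_tmul, hsplit]
    _ ≤ ‖u ω - ω‖ * ‖u⁻¹ ω‖ + ‖ω‖ * ‖u⁻¹ ω - ω‖ := by
        grw [norm_add_le, norm_hilbertTMul, norm_hilbertTMul]
    _ = 2 * ‖u ω - ω‖ := by
        rw [LinearIsometryEquiv.norm_map, norm_inv_apply_sub, hω, mul_one, one_mul, two_mul]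

variable {u : H ≃ₗᵢ[ℂ] H} {a : ZMod p → H ≃ₗᵢ[ℂ] H}

theorem commute_diagonalUnitary_tensorSquareShift (h : ∀ k, u * a k = a (k + 1) * u) :
    Commute (diagonalUnitary fun k => hilbertTensorMap (a k, (a k)⁻¹))
      (tensorSquareShift (u, .ofAdd 1)) := by
  ext x k
  obtain ⟨k, rfl⟩ : ∃ l, k = l + 1 := ⟨k - 1, (sub_add_cancel k 1).symm⟩
  have hpair : (a (k + 1), (a (k + 1))⁻¹) * (u, u) = (u, u) * (a k, (a k)⁻¹) := by
    refine Prod.ext (h k).symm ?_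
    change (a (k + 1))⁻¹ * u = u * (a k)⁻¹
    rw [inv_mul_eq_iff_eq_mul, ← mul_assoc, ← h, mul_inv_cancel_right]
  change hilbertTensorMap _ (tensorSquareShift (u, .ofAdd 1) x (k + 1)) =
    tensorSquareShift (u, .ofAdd 1) _ (k + 1)
  rw [tensorSquareShift_apply_add_one, tensorSquareShift_apply_add_one]
  exact DFunLike.congr_fun (by rw [← map_mul, hpair, map_mul] :
    hilbertTensorMap (a (k + 1), (a (k + 1))⁻¹) * hilbertTensorMap (u, u) =
      hilbertTensorMap (u, u) * hilbertTensorMap (a k, (a k)⁻¹)) (x k)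

omit [NeZero p] in
theorem shift_eq_of_apply_eq_smul (hua : ∀ k, u * a k = a (k + 1) * u) {v w : ZMod p → H}
    (hv : ∀ k, u (v k) = v (k + 1)) (hw : ∀ k, u (w k) = w (k + 1)) (hw0 : ∀ k, w k ≠ 0)
    {β : ZMod p → ℂ} (h : ∀ k, a k (v k) = β k • w k) (k : ZMod p) : β (k + 1) = β k := by
  refine smul_left_injective ℂ (hw0 (k + 1)) ?_
  calc β (k + 1) • w (k + 1) = a (k + 1) (u (v k)) := by rw [hv, h]
    _ = u (a k (v k)) := (DFunLike.congr_fun (hua k) (v k)).symm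
    _ = β k • w (k + 1) := by rw [h, map_smul, hw]

variable {U : Fin 3 → H ≃ₗᵢ[ℂ] H} {A : Fin 3 → ZMod p → H ≃ₗᵢ[ℂ] H} {κ : ZMod p → ℂ}

theorem diagonalUnitary_mul_eq_one (hcomm : ∀ s t k, Commute (A s k) (A t k))
    (hprod : ∀ k x, A 0 k (A 1 k (A 2 k x)) = κ k • x) :
    (diagonalUnitary fun k => hilbertTensorMap (A 0 k, (A 0 k)⁻¹)) *
        (diagonalUnitary fun k => hilbertTensorMap (A 1 k, (A 1 k)⁻¹)) *
        (diagonalUnitary fun k => hilbertTensorMap (A 2 k, (A 2 k)⁻¹)) = 1 := by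
  rw [← map_mul, ← map_mul, ← map_one diagonalUnitary]
  refine congrArg _ (funext fun k => ?_)
  have hinv : (A 0 k)⁻¹ * (A 1 k)⁻¹ * (A 2 k)⁻¹ = (A 0 k * A 1 k * A 2 k)⁻¹ := by
    rw [mul_assoc, (hcomm 1 2 k).inv_inv.eq,
      ((hcomm 0 2 k).inv_inv.mul_right (hcomm 0 1 k).inv_inv).eq, mul_inv_rev, mul_inv_rev,
      mul_assoc]
  calc hilbertTensorMap (A 0 k, (A 0 k)⁻¹) * hilbertTensorMap (A 1 k, (A 1 k)⁻¹) *
        hilbertTensorMap (A 2 k, (A 2 k)⁻¹) =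
      hilbertTensorMap (A 0 k * A 1 k * A 2 k, (A 0 k * A 1 k * A 2 k)⁻¹) := by
        rw [← map_mul, ← map_mul, ← hinv]; rfl
    _ = 1 := hilbertTensorMap_inv_right_eq_one (hprod k)

theorem exists_near_compatible_tensors [CompleteSpace H] (hp : p.Prime) (hp16 : 16 ≤ p)
    (hU : ∀ i j, IsHeisenbergPair p (U i) (U j)) {ω : H} (hω : ‖ω‖ = 1) (hUω : ∀ i, U i ω = ω)
    (hcomm : ∀ s t k, Commute (A s k) (A t k))
    (hUA : ∀ s k, U s * A s k = A s (k + 1) * U s)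
    (hprod : ∀ k x, A 0 k (A 1 k (A 2 k x)) = κ k • x)
    (hAω : ∀ s k, ‖A s k ω - ω‖ ≤ 1 / (1000 * p ^ 2)) :
    ∃ x : Fin 3 → ZMod p → HilbertTensorSquare H,
      (∀ i j, i ≠ j → ∀ k, x j (k + 1) = hilbertTensorMap (U i, U i) (x j k)) ∧
      (∀ i k, hilbertTensorMap (A i k, (A i k)⁻¹) (x (i + 2) k) = x (i + 1) k) ∧
      ∀ i k, ‖x i k - hilbertTMul H ω ω‖ ≤ 1 / 4 := by
  let Ω : PiLp 2 (fun _ : ZMod p => HilbertTensorSquare H) :=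
    .toLp 2 fun _ => hilbertTMul H ω ω
  have hUΩ (i : Fin 3) : tensorSquareShift (U i, .ofAdd 1) Ω = Ω := by
    ext k
    obtain ⟨k, rfl⟩ : ∃ l, k = l + 1 := ⟨k - 1, (sub_add_cancel k 1).symm⟩
    rw [tensorSquareShift_apply_add_one]
    change hilbertTensorMap (U i, U i) (hilbertTMul H ω ω) = hilbertTMul H ω ω
    rw [hilbertTensorMap_tmul, hUω]
  have hAΩ (i : Fin 3) :
      ‖(diagonalUnitary fun k => hilbertTensorMap (A i k, (A i k)⁻¹)) Ω - Ω‖ ≤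
        p * (2 * (1 / (1000 * p ^ 2))) := by
    conv_rhs => rw [← ZMod.card p]
    exact norm_le_card_mul_of_forall_norm_apply_le fun k =>
      (norm_hilbertTensorMap_inv_right_sub_le hω (A i k)).trans (by grw [hAω]; simp)
  obtain ⟨x, hUx, hAx, hxΩ⟩ := exists_compatible_fixed_vectors hp hp16
    (fun i j => ((hU i j).prodMk (z := Multiplicative.ofAdd (1 : ZMod p))
      (by simp [← ofAdd_nsmul])).map tensorSquareShift)
    (fun i => commute_diagonalUnitary_tensorSquareShift (hUA i))
    (diagonalUnitary_mul_eq_one hcomm hprod) hUΩ hAΩ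
  refine ⟨fun i k => x i k, fun i j hij k => ?_, fun i k => ?_, fun i k => ?_⟩
  · rw [← tensorSquareShift_apply_add_one, hUx i j hij]
  · exact congrArg (fun y : PiLp 2 _ => y k) (hAx i)
  · have hbound : (6 * p + 1) * (p * (2 * (1 / (1000 * p ^ 2)))) ≤ (1 / 4 : ℝ) := by
      have : (1 : ℝ) ≤ p := by exact_mod_cast hp.one_le
      field_simp
      nlinarith
    exact ((PiLp.norm_apply_le (x i - Ω) k).trans (hxΩ i)).trans hbound

/-- Replacing `A s k` by `A s k ⊗ (A s k)⁻¹` removes the scalars `κ k`, so that there are exact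
fixed vectors in the tensor square; the rank one operators which they define recover the scalars. -/
theorem scalar_add_one_eq_of_isHeisenbergPair [CompleteSpace H] (hp : p.Prime) (hp16 : 16 ≤ p)
    (hU : ∀ i j, IsHeisenbergPair p (U i) (U j)) {ω : H} (hω : ‖ω‖ = 1) (hUω : ∀ i, U i ω = ω)
    (hcomm : ∀ s t k, Commute (A s k) (A t k))
    (hUA : ∀ s k, U s * A s k = A s (k + 1) * U s)
    (hprod : ∀ k x, A 0 k (A 1 k (A 2 k x)) = κ k • x)
    (hAω : ∀ s k, ‖A s k ω - ω‖ ≤ 1 / (1000 * p ^ 2)) (k : ZMod p) : κ (k + 1) = κ k := by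
  obtain ⟨x, hUx, hAx, hxω⟩ := exists_near_compatible_tensors hp hp16 hU hω hUω hcomm hUA hprod hAω
  let v (i : Fin 3) (k : ZMod p) : H := spectralCutoff (x i k) ω
  have hv0 (i : Fin 3) (k : ZMod p) : v i k ≠ 0 := spectralCutoff_apply_ne_zero hω (hxω i k)
  have hUv (i j : Fin 3) (hij : i ≠ j) (k : ZMod p) : U i (v j k) = v j (k + 1) := by
    simp only [v]
    rw [hUx i j hij, ← spectralCutoff_hilbertTensorMap_apply (U i) (U i), hUω]
  have hAv (i : Fin 3) (k : ZMod p) : ∃ c : ℂ, A i k (v (i + 2) k) = c • v (i + 1) k := by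
    simp only [v]
    rw [← spectralCutoff_hilbertTensorMap_apply (A i k) (A i k)⁻¹, hAx]
    exact exists_spectralCutoff_apply_eq_smul (hxω _ k) _
  choose β hβ using hAv
  have hβ_shift (i : Fin 3) : β i (k + 1) = β i k :=
    shift_eq_of_apply_eq_smul (hUA i) (hUv i _ (by simp)) (hUv i _ (by simp)) (hv0 _) (hβ i) k
  have hκ (k : ZMod p) : κ k = β 2 k * β 1 k * β 0 k := by
    refine smul_left_injective ℂ (hv0 1 k) ?_
    change κ k • v 1 k = (β 2 k * β 1 k * β 0 k) • v 1 k
    have h2 : A 2 k (v 1 k) = β 2 k • v 0 k := hβ 2 k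
    have h1 : A 1 k (v 0 k) = β 1 k • v 2 k := hβ 1 k
    have h0 : A 0 k (v 2 k) = β 0 k • v 1 k := hβ 0 k
    rw [← hprod, h2, map_smul, map_smul, h1, map_smul, h0, smul_smul, smul_smul, mul_assoc]
  simp only [hκ, hβ_shift]

end ShiftedTensorSquare

section CircleMultiplication

variable {Ω E : Type*} [MeasurableSpace Ω] {μ : Measure Ω} [NormedAddCommGroup E]
  [NormedSpace ℂ E] {q : ENNReal}

theorem memLp_circle_smul (φ : Ω →ₘ[μ] Circle) (f : Lp E q μ) :
    MemLp (fun x => φ x • f x) q μ :=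
  (Lp.memLp f).of_le (φ.aestronglyMeasurable.smul (Lp.aestronglyMeasurable f))
    (.of_forall fun _ => (Circle.norm_smul _ _).le)

variable [Fact (1 ≤ q)]

/-- Multiplication by a circle-valued function, as an isometry of `L^q`. -/
def circleMul (φ : Ω →ₘ[μ] Circle) : Lp E q μ →ₗᵢ[ℂ] Lp E q μ where
  toFun f := (memLp_circle_smul φ f).toLp
  map_add' f g := by
    rw [← MemLp.toLp_add]
    refine MemLp.toLp_congr _ _ ?_
    filter_upwards [Lp.coeFn_add f g] with x h
    exact (congrArg (φ x • ·) h).trans (smul_add _ _ _)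
  map_smul' c f := by
    rw [RingHom.id_apply, ← MemLp.toLp_const_smul]
    refine MemLp.toLp_congr _ _ ?_
    filter_upwards [Lp.coeFn_smul c f] with x h
    exact (congrArg (φ x • ·) h).trans (smul_comm _ _ _)
  norm_map' f := by
    change ‖(memLp_circle_smul φ f).toLp‖ = ‖f‖
    rw [Lp.norm_toLp, Lp.norm_def,
      eLpNorm_congr_norm_ae (.of_forall fun x => Circle.norm_smul (φ x) (f x))]

theorem coeFn_circleMul (φ : Ω →ₘ[μ] Circle) (f : Lp E q μ) :
    circleMul φ f =ᵐ[μ] fun x => φ x • f x := (memLp_circle_smul φ f).coeFn_toLp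

theorem circleMul_const (z : Circle) (f : Lp E q μ) :
    circleMul (.const Ω z) f = (z : ℂ) • f := by
  apply Lp.ext
  filter_upwards [coeFn_circleMul (.const Ω z) f, AEEqFun.coeFn_const (μ := μ) Ω z,
    Lp.coeFn_smul (z : ℂ) f] with x h₁ h₂ h₃
  simp [h₁, h₂, h₃, Circle.smul_def]

theorem circleMul_mul (φ ψ : Ω →ₘ[μ] Circle) (f : Lp E q μ) :
    circleMul (φ * ψ) f = circleMul φ (circleMul ψ f) := by
  apply Lp.ext
  filter_upwards [coeFn_circleMul (φ * ψ) f, coeFn_circleMul φ (circleMul ψ f),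
    coeFn_circleMul ψ f, AEEqFun.coeFn_mul φ ψ] with x h₁ h₂ h₃ h₄
  simp [h₁, h₂, h₃, h₄, mul_smul]

theorem circleMul_one (f : Lp E q μ) : circleMul 1 f = f :=
  (circleMul_const 1 f).trans (one_smul ℂ f)

/-- The unitary representation of the circle-valued functions on `L^q` by multiplication. -/
def circleMulHom : (Ω →ₘ[μ] Circle) →* (Lp E q μ ≃ₗᵢ[ℂ] Lp E q μ) where
  toFun φ :=
    { circleMul φ with
      invFun := circleMul φ⁻¹
      left_inv f := by
        change circleMul φ⁻¹ (circleMul φ f) = f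
        rw [← circleMul_mul, inv_mul_cancel, circleMul_one]
      right_inv f := by
        change circleMul φ (circleMul φ⁻¹ f) = f
        rw [← circleMul_mul, mul_inv_cancel, circleMul_one] }
  map_one' := by ext1 f; exact circleMul_one f
  map_mul' φ ψ := by ext1 f; exact circleMul_mul φ ψ f

end CircleMultiplication

section Koopman

variable {Γ Ω : Type*} [Group Γ] [MeasurableSpace Ω] {μ : Measure Ω} [MulAction Γ Ω]
  [MeasurableConstSMul Γ Ω] [SMulInvariantMeasure Γ Ω μ] {E : Type*} [NormedAddCommGroup E]
  [NormedSpace ℂ E] {q : ENNReal} [Fact (1 ≤ q)]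

theorem mk_smul_circleMul (g : Γ) (φ : Ω →ₘ[μ] Circle) (f : Lp E q μ) :
    DomMulAct.mk g • circleMul φ f = circleMul (DomMulAct.mk g • φ) (DomMulAct.mk g • f) := by
  apply Lp.ext
  filter_upwards [DomMulAct.smul_Lp_ae_eq (.mk g) (circleMul φ f),
    coeFn_circleMul (DomMulAct.mk g • φ) (DomMulAct.mk g • f),
    DomMulAct.smul_aeeqFun_aeeq (.mk g) φ, DomMulAct.smul_Lp_ae_eq (.mk g) f,
    (measurePreserving_smul g μ).quasiMeasurePreserving.ae (coeFn_circleMul φ f)]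
    with x h₁ h₂ h₃ h₄ h₅
  rw [h₁, h₂, h₃, h₄]
  exact h₅

variable (Γ μ E q) in
/-- The Koopman representation of a measure preserving action on `L^q`. -/
def koopman : Γ →* (Lp E q μ ≃ₗᵢ[ℂ] Lp E q μ) where
  toFun g :=
    { DistribMulAction.toLinearEquiv ℂ (Lp E q μ) (DomMulAct.mk g⁻¹) with
      norm_map' := DomMulAct.norm_smul_Lp (DomMulAct.mk g⁻¹) }
  map_one' := by
    ext1 f
    change DomMulAct.mk (1 : Γ)⁻¹ • f = f
    rw [inv_one, DomMulAct.mk_one, one_smul]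
  map_mul' g h := by
    ext1 f
    change DomMulAct.mk (g * h)⁻¹ • f = DomMulAct.mk g⁻¹ • DomMulAct.mk h⁻¹ • f
    rw [mul_inv_rev, DomMulAct.mk_mul, mul_smul]

theorem koopman_mul_circleMulHom (g : Γ) (φ : Ω →ₘ[μ] Circle) :
    koopman Γ μ E q g * circleMulHom φ =
      circleMulHom (DomMulAct.mk g⁻¹ • φ) * koopman Γ μ E q g := by
  ext1 f
  exact mk_smul_circleMul g⁻¹ φ f

end Koopman

section FunctionRepresentation

theorem IsTwoCocycle.map {Γ V W : Type*} [Group Γ] [AddCommGroup V] [AddCommGroup W]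
    {ρ : Representation ℤ Γ V} {σ : Representation ℤ Γ W} {c : Γ → Γ → V}
    (hc : IsTwoCocycle ρ c) (T : V →ₗ[ℤ] W) (hT : ∀ g v, T (ρ g v) = σ g (T v)) :
    IsTwoCocycle σ fun g h => T (c g h) := fun g₁ g₂ g₃ => by
  simpa only [map_add, map_sub, map_zero, hT] using congrArg T (hc g₁ g₂ g₃)

theorem map_asAlgebraHom {k G V W : Type*} [CommSemiring k] [Monoid G] [AddCommMonoid V]
    [Module k V] [AddCommMonoid W] [Module k W] {ρ : Representation k G V}
    {σ : Representation k G W} (T : V →ₗ[k] W) (hT : ∀ g v, T (ρ g v) = σ g (T v))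
    (s : MonoidAlgebra k G) (v : V) : T (ρ.asAlgebraHom s v) = σ.asAlgebraHom s (T v) := by
  induction s using MonoidAlgebra.induction_linear with
  | zero => simp
  | add s t hs ht => simp [hs, ht]
  | single g r => simp [hT]

variable (Γ : Type*) {Ω : Type*} [Group Γ] [MeasurableSpace Ω] (μ : Measure Ω) [MulAction Γ Ω]
  [MeasurableConstSMul Γ Ω] [SMulInvariantMeasure Γ Ω μ]
  (A : Type*) [CommGroup A] [TopologicalSpace A] [IsTopologicalGroup A]

/-- The action of `Γ` on the group of `A`-valued measurable functions modulo null sets, as a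
`ℤ`-linear representation on the additive form of this group. -/
def functionRep : Representation ℤ Γ (Additive (Ω →ₘ[μ] A)) where
  toFun g := (MulDistribMulAction.toMonoidHom (Ω →ₘ[μ] A)
    (DomMulAct.mk g⁻¹)).toAdditive.toIntLinearMap
  map_one' := by
    refine LinearMap.ext fun f => ?_
    change DomMulAct.mk (1 : Γ)⁻¹ • f.toMul = f.toMul
    rw [inv_one, DomMulAct.mk_one, one_smul]
  map_mul' g h := by
    refine LinearMap.ext fun f => ?_
    change DomMulAct.mk (g * h)⁻¹ • f.toMul = DomMulAct.mk g⁻¹ • DomMulAct.mk h⁻¹ • f.toMul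
    rw [mul_inv_rev, DomMulAct.mk_mul, mul_smul]

/-- The subgroup of constant functions. -/
def constants : Submodule ℤ (Additive (Ω →ₘ[μ] A)) :=
  LinearMap.range (AddMonoidHom.toIntLinearMap (MonoidHom.toAdditive
    { toFun := AEEqFun.const Ω, map_one' := rfl, map_mul' _ _ := rfl : A →* (Ω →ₘ[μ] A) }))

variable {μ A} in
theorem mk_constants_eq_mk_iff {f g : Additive (Ω →ₘ[μ] A)} :
    Submodule.Quotient.mk (p := constants μ A) f = Submodule.Quotient.mk g ↔
      ∃ z, f.toMul = .const Ω z * g.toMul := by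
  rw [Submodule.Quotient.eq]
  exact exists_congr fun z => eq_comm.trans sub_eq_iff_eq_add

/-- The representation induced by `functionRep` on the functions modulo constants. -/
def functionModConstRep : Representation ℤ Γ (Additive (Ω →ₘ[μ] A) ⧸ constants μ A) :=
  (functionRep Γ μ A).quotient (constants μ A) fun g => by
    rintro _ ⟨z, rfl⟩
    exact ⟨z, rfl⟩

variable {Γ μ}

theorem coe_mem_measZ2 {c : Γ → Γ → Additive (Ω →ₘ[μ] Circle)}
    (hc : IsTwoCocycle (functionRep Γ μ Circle) c) :
    (fun g h => ⇑(c g h).toMul) ∈ measZ2 (fun (g : Γ) (x : Ω) => g • x) μ := by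
  refine ⟨fun g h => (c g h).toMul.measurable, fun g₁ g₂ g₃ => ?_⟩
  set s := DomMulAct.mk g₁⁻¹ • (c g₂ g₃).toMul with hs
  set t := (c (g₁ * g₂) g₃).toMul
  set u := (c g₁ (g₂ * g₃)).toMul
  set v := (c g₁ g₂).toMul
  have hcocycle : s / t * u / v = 1 := hc g₁ g₂ g₃
  filter_upwards [DomMulAct.smul_aeeqFun_aeeq (.mk g₁⁻¹) (c g₂ g₃).toMul, AEEqFun.coeFn_div s t,
    AEEqFun.coeFn_mul (s / t) u, AEEqFun.coeFn_div (s / t * u) v,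
    AEEqFun.coeFn_one (α := Ω) (μ := μ) (β := Circle)] with x h₁ h₂ h₃ h₄ h₅
  rw [hcocycle, h₅, Pi.div_apply, h₃, Pi.mul_apply, h₂, Pi.div_apply, hs, h₁, div_eq_mul_inv,
    div_eq_mul_inv] at h₄
  exact h₄.symm

theorem exists_coboundary_of_coe_mem_measBPsi2 {c : Γ → Γ → Additive (Ω →ₘ[μ] Circle)}
    (hc : (fun g h => ⇑(c g h).toMul) ∈ measBPsi2 (fun (g : Γ) (x : Ω) => g • x) μ) :
    ∃ β, ∀ g h, Submodule.Quotient.mk (c g h) =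
      coboundary (functionModConstRep Γ μ Circle) β g h := by
  obtain ⟨θ, b, -, hb, hcθ⟩ := hc
  let β (g : Γ) : Additive (Ω →ₘ[μ] Circle) := .ofMul (.mk (b g) (hb g).aestronglyMeasurable)
  refine ⟨fun g => Submodule.Quotient.mk (β g), fun g h => ?_⟩
  have hβ : coboundary (functionModConstRep Γ μ Circle) (fun g => Submodule.Quotient.mk (β g)) g h =
      Submodule.Quotient.mk (coboundary (functionRep Γ μ Circle) β g h) := rfl
  rw [hβ, mk_constants_eq_mk_iff]
  refine ⟨θ g h, ((c g h).toMul.mk_coeFn).symm.trans (AEEqFun.mk_eq_mk.2 ?_)⟩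
  filter_upwards [hcθ g h] with x hx
  rw [hx, mul_comm _ (b g x), ← div_eq_mul_inv, ← mul_div_assoc]
  rfl

end FunctionRepresentation

section MultiplicativeDerivative

variable {Y Ω A : Type*} [Group Y] [MeasurableSpace Ω] {μ : Measure Ω} [MulAction Y Ω]
  [MeasurableConstSMul Y Ω] [SMulInvariantMeasure Y Ω μ]

variable {Γ : Type*} [Group Γ] [MulAction Γ Ω] [MeasurableConstSMul Γ Ω]
  [SMulInvariantMeasure Γ Ω μ]

theorem mk_smul_mk_smul_eq [TopologicalSpace A] {g : Γ} {y y' : Y}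
    (h : ∀ x : Ω, y • g • x = g • y' • x) (f : Ω →ₘ[μ] A) :
    DomMulAct.mk g • DomMulAct.mk y • f = DomMulAct.mk y' • DomMulAct.mk g • f := by
  induction f using AEEqFun.induction_on with | _ f hf =>
  simp only [DomMulAct.mk_smul_mk_aeeqFun, h]

section CommGroup

variable [CommGroup A] [TopologicalSpace A] [IsTopologicalGroup A]

/-- The multiplicative derivative `x ↦ f (y • x) / f x` of a measurable function. -/
def mulDerivative (y : Y) : (Ω →ₘ[μ] A) →* (Ω →ₘ[μ] A) :=
  MulDistribMulAction.toMonoidHom (Ω →ₘ[μ] A) (DomMulAct.mk y) / MonoidHom.id _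

theorem mulDerivative_apply (y : Y) (f : Ω →ₘ[μ] A) :
    mulDerivative y f = DomMulAct.mk y • f / f := rfl

theorem mulDerivative_const (y : Y) (z : A) :
    mulDerivative y (.const Ω z : Ω →ₘ[μ] A) = 1 := by
  rw [mulDerivative_apply, DomMulAct.smul_aeeqFun_const, div_self']

theorem mk_smul_mulDerivative {g : Γ} {y y' : Y} (h : ∀ x : Ω, y • g • x = g • y' • x)
    {f : Ω →ₘ[μ] A} {z : A} (hf : DomMulAct.mk g • f = .const Ω z * f) :
    DomMulAct.mk g • mulDerivative y f = mulDerivative y' f :=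
  calc DomMulAct.mk g • mulDerivative y f
      = mulDerivative y' (DomMulAct.mk g • f) := by
        rw [mulDerivative_apply, smul_div', mk_smul_mk_smul_eq h, mulDerivative_apply]
    _ = mulDerivative y' f := by rw [hf, map_mul, mulDerivative_const, one_mul]

end CommGroup

variable {E : Type*} [NormedAddCommGroup E] [NormedSpace ℂ E] {q : ENNReal} [Fact (1 ≤ q)]

theorem norm_circleMul_mulDerivative_sub (f : Ω →ₘ[μ] Circle) {y : Y} {ω : Lp E q μ}
    (hω : DomMulAct.mk y • ω = ω) :
    ‖circleMul (mulDerivative y f) ω - ω‖ =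
      ‖DomMulAct.mk y • circleMul f ω - circleMul f ω‖ := by
  rw [← (circleMul f).norm_map, map_sub, ← circleMul_mul, mulDerivative_apply, mul_div_cancel,
    mk_smul_circleMul, hω]

theorem tendsto_norm_circleMul_mulDerivative_sub [TopologicalSpace Y]
    [ContinuousSMul Yᵈᵐᵃ (Lp E q μ)] (f : Ω →ₘ[μ] Circle) {ω : Lp E q μ}
    (hω : ∀ y : Y, DomMulAct.mk y • ω = ω) :
    Filter.Tendsto (fun y : Y => ‖circleMul (mulDerivative y f) ω - ω‖) (nhds 1) (nhds 0) := by
  simp only [norm_circleMul_mulDerivative_sub f (hω _)]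
  have hcont : Continuous fun y : Y => ‖DomMulAct.mk y • circleMul f ω - circleMul f ω‖ := by
    fun_prop
  simpa using hcont.tendsto 1

end MultiplicativeDerivative

section Bernoulli

theorem IsBernoulliMeasure.eq_infinitePi {ι X₀ : Type*} [MeasurableSpace X₀] {ν : Measure X₀}
    [IsProbabilityMeasure ν] {μ : Measure (ι → X₀)} (h : IsBernoulliMeasure ν μ) :
    μ = Measure.infinitePi fun _ => ν :=
  Measure.eq_infinitePi _ h

theorem IsBernoulliMeasure.isMulLeftInvariant {ι X₀ : Type*} [MeasurableSpace X₀] [Mul X₀]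
    [MeasurableMul X₀] {ν : Measure X₀} [IsProbabilityMeasure ν] [ν.IsMulLeftInvariant]
    {μ : Measure (ι → X₀)} (h : IsBernoulliMeasure ν μ) : μ.IsMulLeftInvariant where
  map_mul_left_eq_self y := by
    rw [h.eq_infinitePi]
    refine (Measure.infinitePi_map_pi (f := fun i x => y i * x) _
      fun i => measurable_const_mul (y i)).trans ?_
    simp only [map_mul_left_eq_self]

attribute [local instance] arrowAction

variable {Γ X₀ : Type*} [Group Γ] [MeasurableSpace X₀]

theorem measurableConstSMul_arrow : MeasurableConstSMul Γ (Γ → X₀) where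
  measurable_const_smul g := measurable_pi_lambda _ fun h => measurable_pi_apply (g⁻¹ * h)

theorem IsBernoulliMeasure.smulInvariantMeasure {ν : Measure X₀} [IsProbabilityMeasure ν]
    {μ : Measure (Γ → X₀)} (h : IsBernoulliMeasure ν μ) : SMulInvariantMeasure Γ (Γ → X₀) μ where
  measure_preimage_smul g s hs := by
    have hmap := Measure.infinitePi_map_piCongrLeft (fun _ : Γ => ν) (Equiv.mulLeft g)
    have hg : ⇑(MeasurableEquiv.piCongrLeft (fun _ : Γ => X₀) (Equiv.mulLeft g)) = (g • ·) := by
      ext x k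
      rw [MeasurableEquiv.coe_piCongrLeft]
      change _ = x (g⁻¹ * k)
      simpa using Equiv.piCongrLeft_apply_apply (fun _ : Γ => X₀) (Equiv.mulLeft g) x (g⁻¹ * k)
    rw [← h.eq_infinitePi, hg] at hmap
    rw [← Measure.map_apply (measurableConstSMul_arrow.measurable_const_smul g) hs, hmap]

end Bernoulli

theorem circle_exp_pow_ne_one {K : ℕ} (hK : 0 < K) {ε : ℝ} (hε : 0 < ε) (hεK : K * ε < 1) :
    Circle.exp ε ^ K ≠ 1 := fun h => by
  have hexp : Circle.exp (K * ε) = 1 :=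
    (congrArg Circle.exp (nsmul_eq_mul K ε)).symm.trans ((map_nsmul Circle.expHom K ε).trans h)
  have hpos : 0 < K * ε := by positivity
  have harg := Circle.arg_exp (x := K * ε) (by linarith [Real.pi_pos])
    (by linarith [Real.pi_gt_three])
  simp only [hexp, Circle.coe_one, Complex.arg_one] at harg
  exact hpos.ne harg

/-- The function `x ↦ x i` on a power of `A`. -/
def coordinate {ι A : Type*} [TopologicalSpace A] [MeasurableSpace A] [OpensMeasurableSpace A]
    [TopologicalSpace.PseudoMetrizableSpace A] [SecondCountableTopology A] (μ : Measure (ι → A))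
    (i : ι) : (ι → A) →ₘ[μ] A :=
  .mk (fun x => x i) (measurable_pi_apply i).aestronglyMeasurable

theorem mulDerivative_coordinate {ι A : Type*} [CommGroup A] [TopologicalSpace A]
    [IsTopologicalGroup A] [MeasurableSpace A] [BorelSpace A]
    [TopologicalSpace.PseudoMetrizableSpace A] [SecondCountableTopology A] {μ : Measure (ι → A)}
    [μ.IsMulLeftInvariant] (y : ι → A) (i : ι) :
    mulDerivative y (coordinate μ i) = .const (ι → A) (y i) := by
  rw [mulDerivative_apply, div_eq_iff_eq_mul]
  rfl

namespace TriangleGroup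

variable {p : ℕ}

theorem exists_mem_measZ2_notMem_measBPsi2 [Fact p.Prime] {Ω : Type*}
    [MeasurableSpace Ω] {μ : Measure Ω} [MulAction (TriangleGroup p) Ω]
    [MeasurableConstSMul (TriangleGroup p) Ω] [SMulInvariantMeasure (TriangleGroup p) Ω μ]
    (φ : Ω →ₘ[μ] Circle)
    (hφ : ∀ (K : ℕ) (F : Fin 3 → (Ω →ₘ[μ] Circle)) (z : Fin 3 → Circle) (w : Circle), 0 < K →
      (∀ i, DomMulAct.mk (gen p i)⁻¹ • F i = .const Ω (z i) * F i) →
      ∏ i, F i ≠ .const Ω w * φ ^ K) :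
    ∃ c ∈ measZ2 (fun (g : TriangleGroup p) (x : Ω) => g • x) μ,
      c ∉ measBPsi2 (fun (g : TriangleGroup p) (x : Ω) => g • x) μ := by
  obtain ⟨c, hc, hsplit⟩ := exists_isTwoCocycle_leftRegular (p := p)
  let ρ := functionRep (TriangleGroup p) μ Circle
  let σ := functionModConstRep (TriangleGroup p) μ Circle
  have hcφ : IsTwoCocycle ρ fun g h => ρ.asAlgebraHom (c g h) (.ofMul φ) :=
    hc.map (ρ.asAlgebraHom.toLinearMap.flip (.ofMul φ)) fun g s =>
      LinearMap.congr_fun (asAlgebraHom_leftRegular ρ g s) _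
  refine ⟨_, coe_mem_measZ2 hcφ, fun hmem => ?_⟩
  obtain ⟨β, hβ⟩ := exists_coboundary_of_coe_mem_measBPsi2 hmem
  obtain ⟨K, f, hK, hf, hsum⟩ := hsplit σ (Submodule.Quotient.mk (.ofMul φ)) β fun g h =>
    (map_asAlgebraHom (constants μ Circle).mkQ (fun _ _ => rfl) _ _).symm.trans (hβ g h)
  choose F hF using fun i => Submodule.Quotient.mk_surjective _ (f i)
  have hFfix (i : Fin 3) : ∃ z : Circle,
      DomMulAct.mk (gen p i)⁻¹ • (F i).toMul = .const Ω z * (F i).toMul :=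
    mk_constants_eq_mk_iff.1 ((congrArg (σ (gen p i)) (hF i)).trans ((hf i).trans (hF i).symm))
  choose z hz using hFfix
  obtain ⟨w, hw⟩ : ∃ w : Circle, (∑ i, F i).toMul = .const Ω w * φ ^ K := by
    refine (mk_constants_eq_mk_iff (g := K • .ofMul φ)).1 ?_
    simp only [← Submodule.mkQ_apply, map_sum, map_nsmul]
    simpa only [Submodule.mkQ_apply, hF] using hsum
  exact hφ K (fun i => (F i).toMul) z w hK hz hw

attribute [local instance] arrowMulDistribMulAction measurableConstSMul_arrow

/-- The function on the triangle group with value `exp (i ε)` on the elements of degree `k` and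
`1` elsewhere. -/
def level (k : ZMod p) (ε : ℝ) (g : TriangleGroup p) : Circle :=
  if degree p g = .ofAdd k then Circle.exp ε else 1

theorem level_zero (k : ZMod p) : level k 0 = 1 := by
  ext1 g
  simp [level]

theorem continuous_level (k : ZMod p) : Continuous (level k) :=
  continuous_pi fun g => by
    unfold level
    split_ifs <;> fun_prop

theorem gen_smul_level (i : Fin 3) (k : ZMod p) (ε : ℝ) :
    gen p i • level k ε = level (k + 1) ε := by
  ext1 g
  have hdegree : degree p ((gen p i)⁻¹ * g) = .ofAdd k ↔ degree p g = .ofAdd (k + 1) := by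
    rw [map_mul, map_inv, degree_gen, inv_mul_eq_iff_eq_mul, ← ofAdd_add, add_comm]
  exact if_congr hdegree rfl rfl

variable {μ : Measure (TriangleGroup p → Circle)} [IsProbabilityMeasure μ] [μ.IsMulLeftInvariant]

theorem exists_level_norm_sub_lt [NeZero p]
    (F : Fin 3 → ((TriangleGroup p → Circle) →ₘ[μ] Circle)) (K : ℕ) {δ : ℝ} (hδ : 0 < δ) :
    ∃ ε : ℝ, 0 < ε ∧ K * ε < 1 ∧ ∀ s (k : ZMod p),
      ‖circleMul (mulDerivative (level k ε) (F s)) (Lp.const 2 μ (1 : ℂ)) -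
        Lp.const 2 μ 1‖ < δ := by
  have : Fact ((2 : ENNReal) ≠ ⊤) := ⟨by norm_num⟩
  have : μ.InnerRegularCompactLTTop := inferInstance
  have hK : ∀ᶠ ε : ℝ in nhds 0, K * ε < 1 :=
    (continuous_const_mul (K : ℝ)).tendsto 0 |>.eventually_lt_const (by simp)
  have hF : ∀ᶠ ε : ℝ in nhds 0, ∀ s (k : ZMod p),
      ‖circleMul (mulDerivative (level k ε) (F s)) (Lp.const 2 μ (1 : ℂ)) -
        Lp.const 2 μ 1‖ < δ := by
    refine Filter.eventually_all.2 fun s => Filter.eventually_all.2 fun k => ?_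
    have hlevel : Filter.Tendsto (level k) (nhds 0) (nhds (1 : TriangleGroup p → Circle)) :=
      level_zero k ▸ (continuous_level k).tendsto 0
    exact ((tendsto_norm_circleMul_mulDerivative_sub (F s) fun y =>
      DomMulAct.smul_Lp_const (.mk y) 1).comp hlevel).eventually_lt_const hδ
  obtain ⟨ε, hε, hεK, hεF⟩ :=
    ((eventually_mem_nhdsWithin (s := Set.Ioi 0)).and
      ((hK.and hF).filter_mono nhdsWithin_le_nhds)).exists
  exact ⟨ε, hε, hεK, hεF⟩

variable [SMulInvariantMeasure (TriangleGroup p) (TriangleGroup p → Circle) μ]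

theorem prod_ne_const_mul_coordinate_pow (hp : p.Prime) (hp16 : 16 ≤ p) {K : ℕ} (hK : 0 < K)
    (F : Fin 3 → ((TriangleGroup p → Circle) →ₘ[μ] Circle)) (z : Fin 3 → Circle) (w : Circle)
    (hF : ∀ i, DomMulAct.mk (gen p i)⁻¹ • F i = .const _ (z i) * F i) :
    ∏ i, F i ≠ .const _ w * coordinate μ 1 ^ K := by
  intro hsplit
  have : Fact (1 < p) := ⟨hp.one_lt⟩
  have : NeZero p := ⟨hp.ne_zero⟩
  obtain ⟨ε, hε, hεK, hεF⟩ := exists_level_norm_sub_lt F K (δ := 1 / (1000 * (p : ℝ) ^ 2))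
    (by have := hp.pos; positivity)
  let D (s : Fin 3) (k : ZMod p) := mulDerivative (level k ε) (F s)
  have hD_shift (s : Fin 3) (k : ZMod p) : DomMulAct.mk (gen p s)⁻¹ • D s k = D s (k + 1) :=
    mk_smul_mulDerivative (fun x => by
      rw [← gen_smul_level s, smul_eq_mul, smul_eq_mul, smul_mul', inv_smul_smul]) (hF s)
  have hD_prod (k : ZMod p) : D 0 k * D 1 k * D 2 k = .const _ (level k ε 1 ^ K) := by
    have := congrArg (mulDerivative (level k ε)) hsplit
    rw [map_prod, map_mul, map_pow, mulDerivative_const, one_mul, mulDerivative_coordinate,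
      Fin.prod_univ_three] at this
    exact this
  have hκ := scalar_add_one_eq_of_isHeisenbergPair hp hp16
    (U := fun s => koopman _ μ ℂ 2 (gen p s)) (ω := Lp.const 2 μ (1 : ℂ))
    (A := fun s k => circleMulHom (D s k)) (κ := fun k => ((level k ε 1 ^ K : Circle) : ℂ))
    (fun i j => (isHeisenbergPair_gen i j).map _) (by simp [Lp.norm_const])
    (fun i => DomMulAct.smul_Lp_const _ _) (fun s t k => (Commute.all _ _).map _)
    (fun s k => by rw [koopman_mul_circleMulHom, hD_shift])
    (fun k x => by
      rw [← circleMul_const, ← hD_prod, circleMul_mul, circleMul_mul]; rfl)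
    (fun s k => (hεF s k).le) 0
  refine circle_exp_pow_ne_one hK hε hεK (Circle.coe_injective ?_)
  have hne : (1 : Multiplicative (ZMod p)) ≠ .ofAdd 1 := Ne.symm (ofAdd_eq_one.not.2 one_ne_zero)
  simpa [level, hne] using hκ.symm

theorem exists_bernoulliShift_cocycle (hp : p.Prime) (hp16 : 16 ≤ p) {ν : Measure Circle}
    [IsProbabilityMeasure ν] [ν.IsHaarMeasure] {μ : Measure (TriangleGroup p → Circle)}
    [IsProbabilityMeasure μ] (hμ : IsBernoulliMeasure ν μ) :
    ∃ c ∈ measZ2 (bernoulliShift (TriangleGroup p) Circle) μ,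
      c ∉ measBPsi2 (bernoulliShift (TriangleGroup p) Circle) μ :=
  have := Fact.mk hp
  have := hμ.isMulLeftInvariant
  have := hμ.smulInvariantMeasure
  exists_mem_measZ2_notMem_measBPsi2 (coordinate μ 1) fun _ F z w hK hF =>
    prod_ne_const_mul_coordinate_pow hp hp16 hK F z w hF

end TriangleGroup

/-- There exists a countable infinite discrete group `G` with
Kazhdan's property (T) such that for the Bernoulli shift `G ↷ (𝕋^G, ν^G)` (`ν` the
Haar probability measure on `𝕋`) the natural map `Ψ₂ : H²(G, 𝕋) → H²(G ↷ 𝕋^G; 𝕋)` is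
not surjective: there is a measurable 2-cocycle which is not cohomologous to any
measurable 2-cocycle that is constant in the space variable. -/
theorem exists_propertyT_group_with_h2_larger_than_psi2_image :
    ∃ (G : Type) (_ : Group G), Countable G ∧ Infinite G ∧ HasPropertyT G ∧
      ∀ (ν : Measure Circle), IsProbabilityMeasure ν → ν.IsHaarMeasure →
      ∀ (μ : Measure (G → Circle)), IsProbabilityMeasure μ → IsBernoulliMeasure ν μ →
      ∃ c : G → G → (G → Circle) → Circle,
        c ∈ measZ2 (bernoulliShift G Circle) μ ∧
        c ∉ measBPsi2 (bernoulliShift G Circle) μ := by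
  have hp : Nat.Prime 17 := by norm_num
  have : Fact (Nat.Prime 17) := ⟨hp⟩
  refine ⟨TriangleGroup 17, inferInstance, inferInstance, inferInstance,
    TriangleGroup.hasPropertyT hp (by norm_num), ?_⟩
  intro ν _ _ μ _ hμ
  exact TriangleGroup.exists_bernoulliShift_cocycle hp (by norm_num) hμ

end AlgActCohomology
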